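/- arXiv:1908.05456 — 2 statements merged into one kernel-verified Lean document; each statement's English description precedes it below -/
import Mathlib

section
/- Let p ≥ 3 be a prime and q = p^k a power of p with q ≥ 7 and q ≠ 9. Set G = C_2 ∗ C_p and H = PSL(2,q). Then H is a homomorphic image of G (there is a surjective group homomorphism G → H), and there exists a generating pair (h1,h2) of H such that for every group homomorphism θ : G → H and every generating pair (g1,g2) of G one has (θ(g1), θ(g2)) ≠ (h1,h2). -/
/-- `SL(2,F)` -/
abbrev SL2 (F : Type) [Field F] : Type := Matrix.SpecialLinearGroup (Fin 2) F

/-- `PSL(2,F)`, the quotient of `SL(2,F)` by its centre `{±I}`. -/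
abbrev PSL2 (F : Type) [Field F] : Type := SL2 F ⧸ Subgroup.center (SL2 F)

/-- The cyclic group of order `m`. -/
abbrev Cyc (m : ℕ) : Type := Multiplicative (ZMod m)

/-
For `2 × 2` matrices `A` and `B` put `commDiscr A B = -det (A * B - B * A)`; on `PSL(2)` it is well
defined, since it does not see signs. Let a homomorphism `C₂ ∗ C_p → PSL(2, F)` send the standard
generators to `A` and `B`. If `commDiscr A B = 0`, then `commDiscr` vanishes on the whole image;
otherwise the homomorphism factors, up to conjugation, through the universal pair `!![0, -1; 1, 0]`,
`!![1, X; 0, 1]` in `PSL(2, F[X])` and evaluation at some `X = w`. If two elements generate the same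
subgroup as the universal pair, then their matrices generate the same algebra, so their `commDiscr`
is associated to `X ^ 2`. Modulo suitable powers of `X` the universal pair is monomial, and this
forces the `commDiscr` to be a square modulo `X ^ 3`. Hence it is a square in `F[X]`, and a
generating pair of `PSL(2, F)` whose `commDiscr` is not a square in `F` cannot lift to a generating
pair of `C₂ ∗ C_p`. Such pairs are written down explicitly; they generate because they yield a
nontrivial transvection.
-/

open Matrix Polynomial
open scoped MatrixGroups

section AdjoinCommutators

variable {R A : Type*} [CommRing R] [Ring A] [Algebra R A] {J : Ideal A} {s : Set A}

theorem mul_mem_of_mem_adjoin (hJ : ∀ z ∈ J, ∀ w ∈ s, z * w ∈ J) {z w : A} (hz : z ∈ J)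
    (hw : w ∈ Algebra.adjoin R s) : z * w ∈ J := by
  induction hw using Algebra.adjoin_induction generalizing z with
  | mem w hw => exact hJ z hz w hw
  | algebraMap r => rw [← Algebra.commutes]; exact J.mul_mem_left _ hz
  | add w w' _ _ ihw ihw' => rw [mul_add]; exact J.add_mem (ihw hz) (ihw' hz)
  | mul w w' _ _ ihw ihw' => rw [← mul_assoc]; exact ihw' (ihw hz)

theorem lie_mem_of_mem_adjoin_left (hJ : ∀ z ∈ J, ∀ w ∈ s, z * w ∈ J) {u v : A}
    (hs : ∀ w ∈ s, ⁅w, v⁆ ∈ J) (hu : u ∈ Algebra.adjoin R s) :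
    ⁅u, v⁆ ∈ J := by
  simp only [Ring.lie_def] at hs ⊢
  induction hu using Algebra.adjoin_induction with
  | mem w hw => exact hs w hw
  | algebraMap r => rw [Algebra.commutes, sub_self]; exact J.zero_mem
  | add w w' _ _ ihw ihw' =>
    rw [add_mul, mul_add, add_sub_add_comm]
    exact J.add_mem ihw ihw'
  | mul w w' _ hw' ihw ihw' =>
    have leibniz : w * w' * v - v * (w * w') = w * (w' * v - v * w') + (w * v - v * w) * w' := by
      noncomm_ring
    rw [leibniz]
    exact J.add_mem (J.mul_mem_left w ihw') (mul_mem_of_mem_adjoin hJ ihw hw')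

theorem lie_mem_of_mem_adjoin (hJ : ∀ z ∈ J, ∀ w ∈ s, z * w ∈ J)
    (hs : ∀ u ∈ s, ∀ v ∈ s, ⁅u, v⁆ ∈ J) {u v : A} (hu : u ∈ Algebra.adjoin R s)
    (hv : v ∈ Algebra.adjoin R s) : ⁅u, v⁆ ∈ J := by
  refine lie_mem_of_mem_adjoin_left hJ (fun w hw ↦ ?_) hu
  have hwv := lie_mem_of_mem_adjoin_left hJ (fun u hu ↦ hs u hu w hw) hv
  simpa only [Ring.lie_def, neg_sub] using J.neg_mem hwv

end AdjoinCommutators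

section CommDiscr

variable {R S : Type*} [CommRing R] [CommRing S]

theorem fin_two_mul_self (X : Matrix (Fin 2) (Fin 2) R) :
    X * X = X.trace • X - X.det • (1 : Matrix (Fin 2) (Fin 2) R) := by
  nontriviality R
  have cayley_hamilton := aeval_self_charpoly X
  simp only [charpoly_fin_two, map_add, map_sub, map_mul, aeval_X, aeval_C,
    Algebra.algebraMap_eq_smul_one, smul_one_mul, sq] at cayley_hamilton
  rwa [sub_add, sub_eq_zero] at cayley_hamilton

theorem fin_two_lie_mul_left (X Y : Matrix (Fin 2) (Fin 2) R) :
    ⁅X, Y⁆ * X = (X.trace • (1 : Matrix (Fin 2) (Fin 2) R) - X) * ⁅X, Y⁆ := by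
  simp only [Ring.lie_def, sub_mul, mul_sub, smul_one_mul]
  rw [← mul_assoc X X Y, ← mul_assoc X Y X, mul_assoc Y X X, fin_two_mul_self X]
  simp only [sub_mul, mul_sub, smul_mul_assoc, mul_smul_comm, one_mul, mul_one]
  abel

/-- The discriminant `-det (X * Y - Y * X)` of a pair of `2 × 2` matrices. For `X` and `Y` of
determinant one it is the trace of the group commutator of `X` and `Y`, minus two. -/
def commDiscr (X Y : Matrix (Fin 2) (Fin 2) R) : R :=
  -⁅X, Y⁆.det

theorem commDiscr_neg_left (X Y : Matrix (Fin 2) (Fin 2) R) :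
    commDiscr (-X) Y = commDiscr X Y := by
  have neg_lie : ⁅-X, Y⁆ = -⁅X, Y⁆ := by simp only [Ring.lie_def]; noncomm_ring
  rw [commDiscr, neg_lie, det_neg, Fintype.card_fin, neg_one_sq, one_mul, commDiscr]

theorem commDiscr_neg_right (X Y : Matrix (Fin 2) (Fin 2) R) :
    commDiscr X (-Y) = commDiscr X Y := by
  have lie_neg : ⁅X, -Y⁆ = -⁅X, Y⁆ := by simp only [Ring.lie_def]; noncomm_ring
  rw [commDiscr, lie_neg, det_neg, Fintype.card_fin, neg_one_sq, one_mul, commDiscr]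

theorem commDiscr_map (f : R →+* S) (X Y : Matrix (Fin 2) (Fin 2) R) :
    commDiscr (X.map f) (Y.map f) = f (commDiscr X Y) := by
  simp [commDiscr, Ring.lie_def, det_fin_two, Matrix.mul_apply]

theorem commDiscr_units_conj (P : GL (Fin 2) R) (X Y : Matrix (Fin 2) (Fin 2) R) :
    commDiscr (P.val * X * P⁻¹.val) (P.val * Y * P⁻¹.val) = commDiscr X Y := by
  have conj_lie : ⁅P.val * X * P⁻¹.val, P.val * Y * P⁻¹.val⁆ = P.val * ⁅X, Y⁆ * P⁻¹.val := by
    simp only [Ring.lie_def, mul_assoc, Units.inv_mul_cancel_left, mul_sub, sub_mul]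
  rw [commDiscr, conj_lie, det_units_conj, commDiscr]

theorem commDiscr_dvd_of_mem_adjoin {X Y U V : Matrix (Fin 2) (Fin 2) R}
    (hU : U ∈ Algebra.adjoin R {X, Y}) (hV : V ∈ Algebra.adjoin R {X, Y}) :
    commDiscr X Y ∣ commDiscr U V := by
  set J : Ideal (Matrix (Fin 2) (Fin 2) R) := Ideal.span {⁅X, Y⁆}
  have lie_mem : ⁅X, Y⁆ ∈ J := Ideal.subset_span rfl
  have lie_swap : ⁅Y, X⁆ = -⁅X, Y⁆ := by simp only [Ring.lie_def, neg_sub]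
  have mul_right_mem : ∀ Z ∈ J, ∀ W ∈ ({X, Y} : Set _), Z * W ∈ J := by
    rintro Z hZ W hW
    obtain ⟨M, rfl⟩ := Ideal.mem_span_singleton'.1 hZ
    rw [mul_assoc]
    refine J.mul_mem_left M ?_
    obtain rfl | rfl := hW
    · rw [fin_two_lie_mul_left]
      exact J.mul_mem_left _ lie_mem
    · rw [← neg_neg ⁅X, W⁆, ← lie_swap, neg_mul, fin_two_lie_mul_left, lie_swap]
      exact J.neg_mem (J.mul_mem_left _ (J.neg_mem lie_mem))
  have lie_generators_mem : ∀ Z ∈ ({X, Y} : Set _), ∀ W ∈ ({X, Y} : Set _), ⁅Z, W⁆ ∈ J := by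
    rintro Z (rfl | rfl) W (rfl | rfl)
    · simp [Ring.lie_def]
    · exact lie_mem
    · rw [lie_swap]; exact J.neg_mem lie_mem
    · simp [Ring.lie_def]
  obtain ⟨M, hM⟩ := Ideal.mem_span_singleton'.1
    (lie_mem_of_mem_adjoin mul_right_mem lie_generators_mem hU hV)
  rw [commDiscr, commDiscr, ← hM, det_mul, neg_dvd, dvd_neg]
  exact dvd_mul_left _ _

end CommDiscr

section SpecialLinear

variable {R : Type*} [CommRing R]

theorem mem_of_mk_mem_closure {G : Type*} [Group G] {N K : Subgroup G} [N.Normal] (hN : N ≤ K)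
    {s : Set G} (hs : s ⊆ K) {y : G} (hy : (y : G ⧸ N) ∈ Subgroup.closure ((↑) '' s)) :
    y ∈ K := by
  rw [← QuotientGroup.coe_mk', ← MonoidHom.map_closure] at hy
  obtain ⟨z, hz, hzy⟩ := hy
  have hz' : z ∈ K := (Subgroup.closure_le K).2 hs hz
  exact (K.mul_mem_cancel_left (K.inv_mem hz')).1 (hN (QuotientGroup.eq.1 hzy))

theorem coe_inv_eq_trace_smul_sub (A : SL(2, R)) :
    (A⁻¹ : SL(2, R)).val = A.val.trace • (1 : Matrix (Fin 2) (Fin 2) R) - A.val := by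
  rw [Matrix.SpecialLinearGroup.coe_inv, adjugate_fin_two]
  ext i j
  fin_cases i <;> fin_cases j <;> simp [trace_fin_two]

/-- The elements of `SL(2, R)` that lie in a given algebra of matrices. They are closed under
inversion because `A⁻¹ = tr A - A`. -/
def specialLinearSubgroup (𝒜 : Subalgebra R (Matrix (Fin 2) (Fin 2) R)) : Subgroup SL(2, R) where
  carrier := {A | A.val ∈ 𝒜}
  one_mem' := 𝒜.one_mem
  mul_mem' := 𝒜.mul_mem
  inv_mem' {A} hA := by
    rw [Set.mem_ofPred_eq, coe_inv_eq_trace_smul_sub]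
    exact 𝒜.sub_mem (𝒜.smul_mem 𝒜.one_mem _) hA

theorem center_le_specialLinearSubgroup (𝒜 : Subalgebra R (Matrix (Fin 2) (Fin 2) R)) :
    Subgroup.center SL(2, R) ≤ specialLinearSubgroup 𝒜 := by
  intro A hA
  obtain ⟨r, -, hr⟩ := Matrix.SpecialLinearGroup.mem_center_iff.1 hA
  change A.val ∈ 𝒜
  rw [← hr]
  exact 𝒜.algebraMap_mem r

theorem coe_mem_adjoin_of_mk_mem_closure {A B M : SL(2, R)}
    (hM : (M : PSL(2, R)) ∈ Subgroup.closure {(A : PSL(2, R)), (B : PSL(2, R))}) :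
    M.val ∈ Algebra.adjoin R {A.val, B.val} := by
  rw [← Set.image_pair] at hM
  refine mem_of_mk_mem_closure (K := specialLinearSubgroup (Algebra.adjoin R {A.val, B.val}))
    (center_le_specialLinearSubgroup _) ?_ hM
  rintro _ (rfl | rfl)
  · exact Algebra.subset_adjoin (Set.mem_insert _ _)
  · exact Algebra.subset_adjoin (Set.mem_insert_of_mem _ rfl)

theorem mul_self_eq_neg_one_of_trace_eq_zero {A : SL(2, R)} (hA : A.val.trace = 0) :
    A.val * A.val = -1 := by
  rw [fin_two_mul_self, hA, A.det_coe, zero_smul, one_smul, zero_sub]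

theorem sub_one_mul_self_of_trace_eq_two {B : SL(2, R)} (hB : B.val.trace = 2) :
    (B.val - 1) * (B.val - 1) = 0 := by
  have hB' := fin_two_mul_self B.val
  rw [hB, B.det_coe, two_smul, one_smul] at hB'
  rw [mul_sub, sub_mul, hB']
  noncomm_ring

section CharP

variable (p : ℕ) [Fact p.Prime] [CharP R p]

theorem pow_char_eq_one_of_trace_eq_two {B : SL(2, R)} (hB : B.val.trace = 2) : B ^ p = 1 := by
  have sub_pow : (B.val - 1) ^ p = 0 :=
    pow_eq_zero_of_le (Fact.out : p.Prime).two_le (by rw [sq, sub_one_mul_self_of_trace_eq_two hB])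
  rw [sub_pow_char_of_commute _ (Commute.one_right _), one_pow, sub_eq_zero] at sub_pow
  exact Subtype.ext sub_pow

theorem trace_eq_two_of_pow_char_eq_one [IsReduced R] {B : SL(2, R)} (hB : B ^ p = 1) :
    B.val.trace = 2 := by
  have sub_nilpotent : IsNilpotent (B.val - 1) := by
    refine ⟨p, ?_⟩
    rw [sub_pow_char_of_commute _ (Commute.one_right _), one_pow,
      ← Matrix.SpecialLinearGroup.coe_pow, hB, Matrix.SpecialLinearGroup.coe_one, sub_self]
  have trace_sub := (isNilpotent_trace_of_isNilpotent sub_nilpotent).eq_zero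
  rwa [Matrix.trace_sub, trace_one, Fintype.card_fin, sub_eq_zero] at trace_sub

end CharP

variable [IsDomain R]

theorem mem_center_iff_eq_one_or_eq_neg_one {A : SL(2, R)} :
    A ∈ Subgroup.center SL(2, R) ↔ A = 1 ∨ A = -1 := by
  rw [Matrix.SpecialLinearGroup.mem_center_iff, Fintype.card_fin]
  constructor
  · rintro ⟨r, hr, hA⟩
    obtain rfl | rfl := sq_eq_one_iff.1 hr
    · exact .inl (Subtype.ext (by rw [← hA, map_one, Matrix.SpecialLinearGroup.coe_one]))
    · exact .inr (Subtype.ext (by rw [← hA, map_neg, map_one, Matrix.SpecialLinearGroup.coe_neg,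
        Matrix.SpecialLinearGroup.coe_one]))
  · rintro (rfl | rfl)
    · exact ⟨1, one_pow 2, by rw [map_one, Matrix.SpecialLinearGroup.coe_one]⟩
    · exact ⟨-1, neg_one_sq, by rw [map_neg, map_one, Matrix.SpecialLinearGroup.coe_neg,
        Matrix.SpecialLinearGroup.coe_one]⟩

theorem mk_eq_mk_iff_eq_or_eq_neg {A B : SL(2, R)} :
    (A : PSL(2, R)) = B ↔ A = B ∨ A = -B := by
  rw [eq_comm, QuotientGroup.eq, mem_center_iff_eq_one_or_eq_neg_one, inv_mul_eq_one,
    inv_mul_eq_iff_eq_mul, mul_neg_one, eq_comm]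

theorem commDiscr_eq_of_mk_eq_mk {A A' B B' : SL(2, R)} (hA : (A : PSL(2, R)) = A')
    (hB : (B : PSL(2, R)) = B') : commDiscr A.val B.val = commDiscr A'.val B'.val := by
  obtain rfl | rfl := mk_eq_mk_iff_eq_or_eq_neg.1 hA <;>
  obtain rfl | rfl := mk_eq_mk_iff_eq_or_eq_neg.1 hB <;>
  simp only [Matrix.SpecialLinearGroup.coe_neg, commDiscr_neg_left, commDiscr_neg_right]

theorem mk_sq_eq_one_of_trace_eq_zero {A : SL(2, R)} (hA : A.val.trace = 0) :
    (A : PSL(2, R)) ^ 2 = 1 := by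
  rw [← QuotientGroup.mk_pow, QuotientGroup.eq_one_iff, mem_center_iff_eq_one_or_eq_neg_one]
  refine .inr (Subtype.ext ?_)
  rw [Matrix.SpecialLinearGroup.coe_pow, sq, mul_self_eq_neg_one_of_trace_eq_zero hA,
    Matrix.SpecialLinearGroup.coe_neg, Matrix.SpecialLinearGroup.coe_one]

theorem trace_eq_zero_of_mk_sq_eq_one {A B : SL(2, R)} (hA : (A : PSL(2, R)) ^ 2 = 1)
    (hAB : commDiscr A.val B.val ≠ 0) : A.val.trace = 0 := by
  have sq_scalar : ∃ r : R, A.val * A.val = r • 1 := by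
    rw [← QuotientGroup.mk_pow, QuotientGroup.eq_one_iff,
      mem_center_iff_eq_one_or_eq_neg_one] at hA
    rw [← sq, ← Matrix.SpecialLinearGroup.coe_pow]
    obtain h | h := hA
    · exact ⟨1, by simp [h]⟩
    · exact ⟨-1, by simp [h]⟩
  obtain ⟨r, hr⟩ := sq_scalar
  have trace_smul : A.val.trace • A.val = (r + 1) • 1 := by
    rw [add_smul, ← hr, fin_two_mul_self, A.det_coe, one_smul, sub_add_cancel]
  have trace_smul_lie : A.val.trace • ⁅A.val, B.val⁆ = 0 := by
    rw [Ring.lie_def, smul_sub, ← smul_mul_assoc, ← mul_smul_comm, trace_smul]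
    simp
  refine (smul_eq_zero.1 trace_smul_lie).resolve_right fun h ↦ hAB ?_
  rw [commDiscr, h, det_zero, neg_zero]

theorem exists_mk_eq_and_pow_eq_one (p : ℕ) [Fact p.Prime] [CharP R p] {b : PSL(2, R)}
    (hb : b ^ p = 1) : ∃ B : SL(2, R), (B : PSL(2, R)) = b ∧ B ^ p = 1 := by
  obtain ⟨B, rfl⟩ := QuotientGroup.mk_surjective b
  rw [← QuotientGroup.mk_pow, QuotientGroup.eq_one_iff, mem_center_iff_eq_one_or_eq_neg_one] at hb
  obtain hB | hB := hb
  · exact ⟨B, rfl, hB⟩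
  · refine ⟨-B, mk_eq_mk_iff_eq_or_eq_neg.2 (.inr rfl), ?_⟩
    apply Subtype.ext
    rw [neg_pow, hB, mul_neg_one, Matrix.SpecialLinearGroup.coe_neg,
      Matrix.SpecialLinearGroup.coe_pow, Matrix.SpecialLinearGroup.coe_neg,
      Matrix.SpecialLinearGroup.coe_one, neg_one_pow_char, neg_neg]

end SpecialLinear

section MonomialCongruence

variable {R : Type*} [CommRing R] {t : R} {M N : Matrix (Fin 2) (Fin 2) R}

/-- Congruence to a scalar matrix: modulo `t` for the off-diagonal entries and modulo `t ^ 2` for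
the difference of the diagonal entries. -/
def IsNearScalar (t : R) (M : Matrix (Fin 2) (Fin 2) R) : Prop :=
  t ∣ M 0 1 ∧ t ∣ M 1 0 ∧ t ^ 2 ∣ M 0 0 - M 1 1

/-- Congruence to a multiple of `!![0, -1; 1, 0]`: modulo `t` for the diagonal entries and modulo
`t ^ 2` for the sum of the off-diagonal entries. -/
def IsNearSkew (t : R) (M : Matrix (Fin 2) (Fin 2) R) : Prop :=
  t ∣ M 0 0 ∧ t ∣ M 1 1 ∧ t ^ 2 ∣ M 0 1 + M 1 0

theorem IsNearScalar.mul (hM : IsNearScalar t M) (hN : IsNearScalar t N) :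
    IsNearScalar t (M * N) := by
  obtain ⟨⟨b, hb⟩, ⟨c, hc⟩, d, hd⟩ := hM
  obtain ⟨⟨b', hb'⟩, ⟨c', hc'⟩, d', hd'⟩ := hN
  simp only [IsNearScalar, mul_apply, Fin.sum_univ_two, hb, hc, hb', hc']
  exact ⟨⟨M 0 0 * b' + b * N 1 1, by ring⟩, ⟨c * N 0 0 + M 1 1 * c', by ring⟩,
    d * N 0 0 + M 1 1 * d' + b * c' - c * b', by linear_combination N 0 0 * hd + M 1 1 * hd'⟩

theorem IsNearScalar.mul_isNearSkew (hM : IsNearScalar t M) (hN : IsNearSkew t N) :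
    IsNearSkew t (M * N) := by
  obtain ⟨⟨b, hb⟩, ⟨c, hc⟩, d, hd⟩ := hM
  obtain ⟨⟨a', ha'⟩, ⟨d', hd'⟩, s, hs⟩ := hN
  simp only [IsNearSkew, mul_apply, Fin.sum_univ_two, hb, hc, ha', hd']
  exact ⟨⟨M 0 0 * a' + b * N 1 0, by ring⟩, ⟨c * N 0 1 + M 1 1 * d', by ring⟩,
    M 0 0 * s - d * N 1 0 + b * d' + c * a', by linear_combination M 0 0 * hs - N 1 0 * hd⟩

theorem IsNearSkew.mul_isNearScalar (hM : IsNearSkew t M) (hN : IsNearScalar t N) :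
    IsNearSkew t (M * N) := by
  obtain ⟨⟨a, ha⟩, ⟨d, hd⟩, s, hs⟩ := hM
  obtain ⟨⟨b', hb'⟩, ⟨c', hc'⟩, d', hd'⟩ := hN
  simp only [IsNearSkew, mul_apply, Fin.sum_univ_two, ha, hd, hb', hc']
  exact ⟨⟨a * N 0 0 + M 0 1 * c', by ring⟩, ⟨M 1 0 * b' + d * N 1 1, by ring⟩,
    s * N 0 0 - M 0 1 * d' + a * b' + d * c', by linear_combination N 0 0 * hs - M 0 1 * hd'⟩

theorem IsNearSkew.mul (hM : IsNearSkew t M) (hN : IsNearSkew t N) :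
    IsNearScalar t (M * N) := by
  obtain ⟨⟨a, ha⟩, ⟨d, hd⟩, s, hs⟩ := hM
  obtain ⟨⟨a', ha'⟩, ⟨d', hd'⟩, s', hs'⟩ := hN
  simp only [IsNearScalar, mul_apply, Fin.sum_univ_two, ha, hd, ha', hd']
  exact ⟨⟨a * N 0 1 + M 0 1 * d', by ring⟩, ⟨M 1 0 * a' + d * N 1 0, by ring⟩,
    a * a' - d * d' + M 0 1 * s' - s * N 0 1,
    by linear_combination M 0 1 * hs' - N 0 1 * hs⟩

theorem exists_pow_three_dvd_commDiscr_sub_sq (hM : IsNearScalar t M ∨ IsNearSkew t M)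
    (hN : IsNearScalar t N ∨ IsNearSkew t N) : ∃ e, t ^ 3 ∣ commDiscr M N - (t * e) ^ 2 := by
  simp only [commDiscr, Ring.lie_def, det_fin_two, Matrix.sub_apply, mul_apply, Fin.sum_univ_two]
  obtain ⟨⟨b, hb⟩, ⟨c, hc⟩, d, hd⟩ | ⟨⟨a, ha⟩, ⟨d, hd⟩, s, hs⟩ := hM <;>
    obtain ⟨⟨b', hb'⟩, ⟨c', hc'⟩, d', hd'⟩ | ⟨⟨a', ha'⟩, ⟨d', hd'⟩, s', hs'⟩ := hN
  · rw [sub_eq_iff_eq_add'] at hd hd'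
    simp only [hb, hc, hd, hb', hc', hd']
    exact ⟨0, t * (b * c' - b' * c) ^ 2 + t ^ 3 * (b' * d - b * d') * (c * d' - c' * d), by ring⟩
  · rw [sub_eq_iff_eq_add'] at hd
    simp only [hb, hc, hd, ha', hd']
    exact ⟨b * N 1 0 - N 0 1 * c, t * (N 0 1 * d - b * (a' - d')) * (c * (a' - d') - N 1 0 * d),
      by ring⟩
  · rw [sub_eq_iff_eq_add'] at hd'
    simp only [ha, hd, hb', hc', hd']
    exact ⟨M 0 1 * c' - b' * M 1 0, t * (b' * (a - d) - M 0 1 * d') * (M 1 0 * d' - c' * (a - d)),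
      by ring⟩
  · rw [← eq_sub_iff_add_eq'] at hs hs'
    simp only [ha, hd, hs, ha', hd', hs']
    exact ⟨N 0 1 * (a - d) - M 0 1 * (a' - d'),
      t * (M 0 1 * s' - N 0 1 * s) ^ 2 +
        t * (N 0 1 * (a - d) - M 0 1 * (a' - d')) * (s * (a' - d') - s' * (a - d)), by ring⟩

/-- The matrices in `SL(2, R)` that are congruent to a scalar matrix or to a multiple of
`!![0, -1; 1, 0]` in the sense of `IsNearScalar` and `IsNearSkew`. -/
def monomialCongruenceSubgroup (t : R) : Subgroup SL(2, R) where
  carrier := {A | IsNearScalar t A.val ∨ IsNearSkew t A.val}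
  one_mem' := .inl (by simp [IsNearScalar])
  mul_mem' := by
    rintro A B (hA | hA) (hB | hB)
    exacts [.inl (hA.mul hB), .inr (hA.mul_isNearSkew hB), .inr (hA.mul_isNearScalar hB),
      .inl (hA.mul hB)]
  inv_mem' := by
    rintro A (⟨hb, hc, hd⟩ | ⟨ha, hd, hs⟩)
    · exact .inl (by simpa [IsNearScalar, adjugate_fin_two, hb, hc] using dvd_sub_comm.1 hd)
    · exact .inr (by simpa [IsNearSkew, adjugate_fin_two, ha, hd, -neg_add_rev, ← neg_add] using hs)

theorem center_le_monomialCongruenceSubgroup (t : R) :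
    Subgroup.center SL(2, R) ≤ monomialCongruenceSubgroup t := by
  intro A hA
  obtain ⟨r, -, hr⟩ := Matrix.SpecialLinearGroup.mem_center_iff.1 hA
  exact .inl (by simp [IsNearScalar, ← hr])

theorem coe_S : (ModularGroup.S : SL(2, R)).val = !![0, -1; 1, 0] := by
  rw [Matrix.SpecialLinearGroup.coe_matrix_coe, ModularGroup.coe_S]
  ext i j
  fin_cases i <;> fin_cases j <;> simp

/-- The upper unitriangular matrix with entry `x`. -/
abbrev upper (x : R) : SL(2, R) :=
  Matrix.SpecialLinearGroup.transvection (zero_ne_one' (Fin 2)) x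

theorem coe_upper (x : R) : (upper x).val = !![1, x; 0, 1] := by
  rw [Matrix.SpecialLinearGroup.transvection_coe]
  ext i j
  fin_cases i <;> fin_cases j <;> simp

theorem trace_S : (ModularGroup.S : SL(2, R)).val.trace = 0 := by
  rw [coe_S, trace_fin_two_of, zero_add]

theorem trace_upper (x : R) : (upper x).val.trace = 2 := by
  rw [coe_upper, trace_fin_two_of, one_add_one_eq_two]

theorem S_mem_monomialCongruenceSubgroup (t : R) :
    (ModularGroup.S : SL(2, R)) ∈ monomialCongruenceSubgroup t :=
  .inr (by rw [coe_S]; simp [IsNearSkew])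

theorem upper_mem_monomialCongruenceSubgroup (t : R) :
    upper t ∈ monomialCongruenceSubgroup t :=
  .inl (by simp [IsNearScalar, coe_upper])

theorem commDiscr_S_upper (t : R) :
    commDiscr (ModularGroup.S : SL(2, R)).val (upper t).val = t ^ 2 := by
  rw [coe_S, coe_upper]
  simp [commDiscr, Ring.lie_def, det_fin_two, sq]

end MonomialCongruence

theorem isSquare_of_X_pow_three_dvd_sub_sq {F : Type*} [Field F] {f e : F[X]} (hf : f ∣ X ^ 2)
    (hf' : X ^ 2 ∣ f) (he : X ^ 3 ∣ f - (X * e) ^ 2) : IsSquare f := by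
  obtain ⟨u, hu⟩ := associated_of_dvd_dvd hf' hf
  obtain ⟨c, -, hc⟩ := Polynomial.isUnit_iff.1 u.isUnit
  have c_eq_sq : c = e.coeff 0 ^ 2 := by
    obtain ⟨g, hg⟩ := he
    have coeff_two := congrArg (coeff · 2) hg
    simp only [← hu, ← hc, mul_pow, coeff_sub, coeff_X_pow_mul'] at coeff_two
    simpa [coeff_zero_eq_eval_zero, sub_eq_zero] using coeff_two
  exact ⟨X * C (e.coeff 0), by rw [← hu, ← hc, c_eq_sq, C_pow]; ring⟩

theorem isSquare_commDiscr_of_closure_eq {F : Type*} [Field F] {z₁ z₂ : SL(2, F[X])}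
    (h : Subgroup.closure {(z₁ : PSL(2, F[X])), (z₂ : PSL(2, F[X]))} = Subgroup.closure
      {((ModularGroup.S : SL(2, F[X])) : PSL(2, F[X])), ((upper X : SL(2, F[X])) : PSL(2, F[X]))}) :
    IsSquare (commDiscr z₁.val z₂.val) := by
  have dvd_X_sq : commDiscr z₁.val z₂.val ∣ (X : F[X]) ^ 2 := by
    rw [← commDiscr_S_upper]
    apply commDiscr_dvd_of_mem_adjoin <;> apply coe_mem_adjoin_of_mk_mem_closure <;> rw [h] <;>
      exact Subgroup.subset_closure (by simp)
  have mk_mem : ∀ z ∈ ({z₁, z₂} : Set SL(2, F[X])), (z : PSL(2, F[X])) ∈ Subgroup.closure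
      {((ModularGroup.S : SL(2, F[X])) : PSL(2, F[X])),
        ((upper X : SL(2, F[X])) : PSL(2, F[X]))} := by
    intro z hz
    rw [← h, ← Set.image_pair]
    exact Subgroup.subset_closure (Set.mem_image_of_mem _ hz)
  have mem_congruence : ∀ z ∈ ({z₁, z₂} : Set SL(2, F[X])), z ∈ monomialCongruenceSubgroup X := by
    intro z hz
    have hz := mk_mem z hz
    rw [← Set.image_pair] at hz
    refine mem_of_mk_mem_closure (center_le_monomialCongruenceSubgroup X) ?_ hz
    rintro _ (rfl | rfl)
    exacts [S_mem_monomialCongruenceSubgroup X, upper_mem_monomialCongruenceSubgroup X]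
  have X_sq_dvd : (X : F[X]) ^ 2 ∣ commDiscr z₁.val z₂.val := by
    rw [← commDiscr_S_upper]
    exact commDiscr_dvd_of_mem_adjoin (coe_mem_adjoin_of_mk_mem_closure (mk_mem z₁ (by simp)))
      (coe_mem_adjoin_of_mk_mem_closure (mk_mem z₂ (by simp)))
  obtain ⟨e, he⟩ := exists_pow_three_dvd_commDiscr_sub_sq (mem_congruence z₁ (by simp))
    (mem_congruence z₂ (by simp))
  exact isSquare_of_X_pow_three_dvd_sub_sq dvd_X_sq X_sq_dvd he

section NormalForm

variable {R F : Type*} [CommRing R] [Field F]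

/-- Conjugation of `SL(2, R)` by an invertible matrix. -/
def conjGL (P : GL (Fin 2) R) : SL(2, R) →* SL(2, R) where
  toFun A := ⟨P.val * A.val * P⁻¹.val, by rw [det_units_conj, A.det_coe]⟩
  map_one' := Subtype.ext (by simp)
  map_mul' A B := Subtype.ext <| by
    change _ = P.val * A.val * P⁻¹.val * (P.val * B.val * P⁻¹.val)
    simp only [Matrix.SpecialLinearGroup.coe_mul, mul_assoc, Units.inv_mul_cancel_left]

/-- The homomorphism `SL(2, F[X]) → SL(2, F)` that evaluates at `w` and then conjugates by `P`. -/
noncomputable def evalConj (P : GL (Fin 2) F) (w : F) : SL(2, F[X]) →* SL(2, F) :=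
  (conjGL P).comp (Matrix.SpecialLinearGroup.map (evalRingHom w))

theorem coe_evalConj (P : GL (Fin 2) F) (w : F) (z : SL(2, F[X])) :
    (evalConj P w z).val = P.val * z.val.map (evalRingHom w) * P⁻¹.val :=
  rfl

theorem evalConj_neg (P : GL (Fin 2) F) (w : F) (z : SL(2, F[X])) :
    evalConj P w (-z) = -evalConj P w z := by
  apply Subtype.ext
  simp only [Matrix.SpecialLinearGroup.coe_neg, coe_evalConj]
  rw [Matrix.map_neg _ (map_neg _), mul_neg, neg_mul]

theorem commDiscr_evalConj (P : GL (Fin 2) F) (w : F) (z₁ z₂ : SL(2, F[X])) :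
    commDiscr (evalConj P w z₁).val (evalConj P w z₂).val =
      (commDiscr z₁.val z₂.val).eval w := by
  rw [coe_evalConj, coe_evalConj, commDiscr_units_conj, commDiscr_map, coe_evalRingHom]

theorem center_le_comap_evalConj (P : GL (Fin 2) F) (w : F) :
    Subgroup.center SL(2, F[X]) ≤ (Subgroup.center SL(2, F)).comap (evalConj P w) := by
  intro z hz
  rw [Subgroup.mem_comap, mem_center_iff_eq_one_or_eq_neg_one]
  obtain rfl | rfl := mem_center_iff_eq_one_or_eq_neg_one.1 hz
  · exact .inl (map_one _)
  · exact .inr (by rw [evalConj_neg, map_one])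

theorem mul_mul_self_of_det_eq_zero {N : Matrix (Fin 2) (Fin 2) R} (hN : N.det = 0)
    (A : Matrix (Fin 2) (Fin 2) R) : N * A * N = (A * N).trace • N := by
  rw [det_fin_two] at hN
  ext i j
  fin_cases i <;> fin_cases j <;>
    simp only [Matrix.mul_apply, trace_fin_two, Fin.sum_univ_two, Matrix.smul_apply, smul_eq_mul,
      Fin.zero_eta, Fin.mk_one]
  · linear_combination (-A 1 1) * hN
  · linear_combination A 0 1 * hN
  · linear_combination A 1 0 * hN
  · linear_combination (-A 0 0) * hN

theorem commDiscr_eq_of_trace_eq_zero {A N : Matrix (Fin 2) (Fin 2) R} (hA : A.trace = 0)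
    (hN : N.trace = 0) : commDiscr A N = (A * N).trace ^ 2 - 4 * A.det * N.det := by
  rw [trace_fin_two, add_eq_zero_iff_eq_neg'] at hA hN
  simp only [commDiscr, Ring.lie_def, det_fin_two, trace_fin_two, Matrix.sub_apply, mul_apply,
    Fin.sum_univ_two, hA, hN]
  ring

theorem exists_gl_mul_eq {A N : Matrix (Fin 2) (Fin 2) F} {v u : Fin 2 → F} {w : F} (hv : v ≠ 0)
    (hw : w ≠ 0) (hAv : A *ᵥ v = u) (hAu : A *ᵥ u = -v) (hNv : N *ᵥ v = 0)
    (hNu : N *ᵥ u = w • v) : ∃ P : GL (Fin 2) F,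
      A * P.val = P.val * !![0, -1; 1, 0] ∧ N * P.val = P.val * !![0, w; 0, 0] := by
  set P : Matrix (Fin 2) (Fin 2) F := (of ![v, u])ᵀ with hP
  have mulVec_eq (x : Fin 2 → F) : P *ᵥ x = x 0 • v + x 1 • u := by
    rw [hP, mulVec_transpose, vecMul_eq_sum, Fin.sum_univ_two]
    rfl
  have det_ne_zero : P.det ≠ 0 := by
    intro hdet
    obtain ⟨x, hx, hPx⟩ := exists_mulVec_eq_zero_iff.2 hdet
    rw [mulVec_eq] at hPx
    have hx₁ : x 1 = 0 := by
      have hNPx := congrArg (N *ᵥ ·) hPx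
      simp only [mulVec_add, mulVec_smul, hNv, hNu, smul_zero, zero_add, mulVec_zero] at hNPx
      simpa [hv, hw] using hNPx
    have hx₀ : x 0 = 0 := by simpa [hx₁, hv] using hPx
    exact hx (funext fun i ↦ by fin_cases i <;> assumption)
  refine ⟨GeneralLinearGroup.mkOfDetNeZero P det_ne_zero, ?_, ?_⟩ <;>
  · refine Matrix.ext_of_mulVec_single fun i ↦ ?_
    change (_ * P) *ᵥ _ = (P * _) *ᵥ _
    simp only [← mulVec_mulVec, mulVec_eq, mulVec_add, mulVec_smul, hAv, hAu, hNv, hNu]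
    fin_cases i <;> simp

theorem exists_evalConj_eq {A B : SL(2, F)} (hA : A.val.trace = 0) (hB : B.val.trace = 2)
    (hAB : commDiscr A.val B.val ≠ 0) : ∃ (P : GL (Fin 2) F) (w : F),
      evalConj P w ModularGroup.S = A ∧ evalConj P w (upper X) = B := by
  set N : Matrix (Fin 2) (Fin 2) F := B.val - 1 with hN
  set w : F := (A.val * N).trace with hw
  have hN_sq : N * N = 0 := sub_one_mul_self_of_trace_eq_two hB
  have hN_det : N.det = 0 := by
    rw [← sq_eq_zero_iff, sq, ← det_mul, hN_sq, det_zero]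
  have hw_sq : commDiscr A.val B.val = w ^ 2 := by
    have commDiscr_sub_one : commDiscr A.val B.val = commDiscr A.val N := by
      simp [commDiscr, Ring.lie_def, hN, mul_sub, sub_mul]
    rw [commDiscr_sub_one, commDiscr_eq_of_trace_eq_zero hA, hN_det, mul_zero, sub_zero]
    simp [hN, Matrix.trace_sub, hB]
  obtain ⟨e, he⟩ : ∃ e, N *ᵥ e ≠ 0 := by
    by_contra! h
    have N_eq_zero : N = 0 := Matrix.ext_of_mulVec_single fun i ↦ by rw [h, zero_mulVec]
    exact hAB (by rw [hw_sq, hw, N_eq_zero, mul_zero, trace_zero, zero_pow two_ne_zero])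
  have hA_sq : A.val * A.val = -1 := mul_self_eq_neg_one_of_trace_eq_zero hA
  obtain ⟨P, hAP, hNP⟩ := exists_gl_mul_eq (A := A.val) (N := N) (w := w) he
    (fun h ↦ hAB (by rw [hw_sq, h, zero_pow two_ne_zero])) rfl
    (by rw [mulVec_mulVec, hA_sq, neg_mulVec, one_mulVec])
    (by rw [mulVec_mulVec, hN_sq, zero_mulVec])
    (by rw [mulVec_mulVec, mulVec_mulVec, mul_mul_self_of_det_eq_zero hN_det,
      smul_mulVec])
  refine ⟨P, w, Subtype.ext ?_, Subtype.ext ?_⟩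
  · rw [coe_evalConj, coe_S, Units.mul_inv_eq_iff_eq_mul, hAP]
    congr 1
    ext i j
    fin_cases i <;> fin_cases j <;> simp
  · have hBP : B.val * P.val = P.val * (!![0, w; 0, 0] + 1) := by
      rw [mul_add, ← hNP, hN, sub_mul, one_mul, mul_one, sub_add_cancel]
    rw [coe_evalConj, coe_upper, Units.mul_inv_eq_iff_eq_mul, hBP]
    congr 1
    ext i j
    fin_cases i <;> fin_cases j <;> simp

end NormalForm

section CyclicFreeProduct

variable {m n : ℕ} {H : Type*} [Group H]

theorem closure_ofAdd_one : Subgroup.closure {(Multiplicative.ofAdd 1 : Cyc m)} = ⊤ := by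
  refine (Subgroup.eq_top_iff' _).2 fun x ↦ Subgroup.mem_closure_singleton.2 ?_
  obtain ⟨k, hk⟩ := ZMod.intCast_surjective x.toAdd
  exact ⟨k, by rw [← ofAdd_zsmul, zsmul_one, hk, ofAdd_toAdd]⟩

theorem ofAdd_one_pow : (Multiplicative.ofAdd 1 : Cyc m) ^ m = 1 := by
  rw [← ofAdd_nsmul, nsmul_one, ZMod.natCast_self, ofAdd_zero]

theorem exists_cyc_hom {x : H} (hx : x ^ m = 1) :
    ∃ f : Cyc m →* H, f (Multiplicative.ofAdd 1) = x := by
  refine ⟨AddMonoidHom.toMultiplicativeLeft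
    (ZMod.lift m ⟨zmultiplesHom (Additive H) (Additive.ofMul x), ?_⟩), ?_⟩
  · simp [← ofMul_pow, hx]
  · rw [← Int.cast_one]
    simp [-Int.cast_one]

/-- The generator of the first factor of `Cyc m ∗ Cyc n`. -/
def genLeft : Monoid.Coprod (Cyc m) (Cyc n) :=
  Monoid.Coprod.inl (Multiplicative.ofAdd 1)

/-- The generator of the second factor of `Cyc m ∗ Cyc n`. -/
def genRight : Monoid.Coprod (Cyc m) (Cyc n) :=
  Monoid.Coprod.inr (Multiplicative.ofAdd 1)

theorem genLeft_pow : (genLeft : Monoid.Coprod (Cyc m) (Cyc n)) ^ m = 1 := by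
  rw [genLeft, ← map_pow, ofAdd_one_pow, map_one]

theorem genRight_pow : (genRight : Monoid.Coprod (Cyc m) (Cyc n)) ^ n = 1 := by
  rw [genRight, ← map_pow, ofAdd_one_pow, map_one]

theorem closure_genLeft_genRight :
    Subgroup.closure {(genLeft : Monoid.Coprod (Cyc m) (Cyc n)), genRight} = ⊤ := by
  rw [← Monoid.Coprod.range_inl_sup_range_inr, MonoidHom.range_eq_map, MonoidHom.range_eq_map,
    ← closure_ofAdd_one, ← closure_ofAdd_one, MonoidHom.map_closure, MonoidHom.map_closure,
    Set.image_singleton, Set.image_singleton, ← Subgroup.closure_union, Set.singleton_union]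
  rfl

theorem exists_coprod_cyc_hom {x y : H} (hx : x ^ m = 1) (hy : y ^ n = 1) :
    ∃ f : Monoid.Coprod (Cyc m) (Cyc n) →* H, f genLeft = x ∧ f genRight = y := by
  obtain ⟨fx, hfx⟩ := exists_cyc_hom hx
  obtain ⟨fy, hfy⟩ := exists_cyc_hom hy
  exact ⟨Monoid.Coprod.lift fx fy, by simp [genLeft, hfx], by simp [genRight, hfy]⟩

theorem coprod_cyc_hom_ext {f g : Monoid.Coprod (Cyc m) (Cyc n) →* H}
    (hl : f genLeft = g genLeft) (hr : f genRight = g genRight) : f = g :=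
  MonoidHom.eq_of_eqOn_dense closure_genLeft_genRight <| by
    rintro _ (rfl | rfl)
    exacts [hl, hr]

end CyclicFreeProduct

section Obstruction

variable {F : Type*} [Field F] (p : ℕ) [Fact p.Prime] [CharP F p]

theorem isSquare_commDiscr_of_commDiscr_ne_zero
    {θ : Monoid.Coprod (Cyc 2) (Cyc p) →* PSL(2, F)} {A B x₁ x₂ : SL(2, F)}
    {g₁ g₂ : Monoid.Coprod (Cyc 2) (Cyc p)} (hg : Subgroup.closure {g₁, g₂} = ⊤)
    (hA : θ genLeft = A) (hB : θ genRight = B) (hAB : commDiscr A.val B.val ≠ 0)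
    (htA : A.val.trace = 0) (htB : B.val.trace = 2) (hx₁ : θ g₁ = x₁)
    (hx₂ : θ g₂ = x₂) : IsSquare (commDiscr x₁.val x₂.val) := by
  obtain ⟨P, w, hPA, hPB⟩ := exists_evalConj_eq htA htB hAB
  obtain ⟨Θ, hΘl, hΘr⟩ := exists_coprod_cyc_hom (m := 2) (n := p)
    (x := ((ModularGroup.S : SL(2, F[X])) : PSL(2, F[X])))
    (y := ((upper X : SL(2, F[X])) : PSL(2, F[X])))
    (mk_sq_eq_one_of_trace_eq_zero trace_S)
    (by rw [← QuotientGroup.mk_pow, pow_char_eq_one_of_trace_eq_two p (trace_upper X),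
      QuotientGroup.mk_one])
  set κ : PSL(2, F[X]) →* PSL(2, F) :=
    QuotientGroup.map _ _ (evalConj P w) (center_le_comap_evalConj P w)
  have κ_comp : κ.comp Θ = θ := coprod_cyc_hom_ext
    (by rw [MonoidHom.comp_apply, hΘl, QuotientGroup.map_mk, hPA, hA])
    (by rw [MonoidHom.comp_apply, hΘr, QuotientGroup.map_mk, hPB, hB])
  obtain ⟨z₁, hz₁⟩ := QuotientGroup.mk_surjective (Θ g₁)
  obtain ⟨z₂, hz₂⟩ := QuotientGroup.mk_surjective (Θ g₂)
  have mk_eq {g : Monoid.Coprod (Cyc 2) (Cyc p)} {x : SL(2, F)} {z : SL(2, F[X])}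
      (hx : θ g = x) (hz : z = Θ g) : (x : PSL(2, F)) = evalConj P w z := by
    rw [← hx, ← κ_comp, MonoidHom.comp_apply, ← hz, QuotientGroup.map_mk]
  rw [commDiscr_eq_of_mk_eq_mk (mk_eq hx₁ hz₁) (mk_eq hx₂ hz₂), commDiscr_evalConj,
    ← coe_evalRingHom]
  refine (isSquare_commDiscr_of_closure_eq ?_).map (evalRingHom w)
  have map_closure := congrArg (Subgroup.map Θ) (hg.trans closure_genLeft_genRight.symm)
  rwa [MonoidHom.map_closure, MonoidHom.map_closure, Set.image_pair, Set.image_pair, hΘl, hΘr,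
    ← hz₁, ← hz₂] at map_closure

theorem isSquare_commDiscr_of_closure_eq_top {θ : Monoid.Coprod (Cyc 2) (Cyc p) →* PSL(2, F)}
    {g₁ g₂ : Monoid.Coprod (Cyc 2) (Cyc p)} (hg : Subgroup.closure {g₁, g₂} = ⊤)
    {x₁ x₂ : SL(2, F)} (hx₁ : θ g₁ = x₁) (hx₂ : θ g₂ = x₂) :
    IsSquare (commDiscr x₁.val x₂.val) := by
  obtain ⟨A, hA⟩ := QuotientGroup.mk_surjective (θ genLeft)
  obtain ⟨B, hB, hBp⟩ := exists_mk_eq_and_pow_eq_one p (b := θ genRight)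
    (by rw [← map_pow, genRight_pow, map_one])
  by_cases hAB : commDiscr A.val B.val = 0
  · have mem_adjoin (g : Monoid.Coprod (Cyc 2) (Cyc p)) {x : SL(2, F)} (hx : θ g = x) :
        x.val ∈ Algebra.adjoin F {A.val, B.val} := by
      apply coe_mem_adjoin_of_mk_mem_closure
      rw [hA, hB, ← hx, ← Set.image_pair, ← MonoidHom.map_closure, closure_genLeft_genRight]
      exact Subgroup.mem_map_of_mem θ trivial
    have dvd := commDiscr_dvd_of_mem_adjoin (mem_adjoin g₁ hx₁) (mem_adjoin g₂ hx₂)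
    rw [hAB, zero_dvd_iff] at dvd
    exact dvd ▸ IsSquare.zero
  · have hA_sq : (A : PSL(2, F)) ^ 2 = 1 := by
      rw [hA, ← map_pow, genLeft_pow, map_one]
    exact isSquare_commDiscr_of_commDiscr_ne_zero p hg hA.symm hB.symm hAB
      (trace_eq_zero_of_mk_sq_eq_one hA_sq hAB) (trace_eq_two_of_pow_char_eq_one p hBp) hx₁ hx₂

end Obstruction

section Transvections

variable {R F : Type*} [CommRing R] [Field F]

/-- The additive group of those `x` for which the transvection with entry `x` at `(i, j)` lies in
`K`. -/
def transvectionCoeffs {ι : Type*} [DecidableEq ι] [Fintype ι]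
    (K : Subgroup (Matrix.SpecialLinearGroup ι R)) {i j : ι} (hij : i ≠ j) : AddSubgroup R where
  carrier := {x | Matrix.SpecialLinearGroup.transvection hij x ∈ K}
  zero_mem' := by simp
  add_mem' hx hy := by
    rw [Set.mem_ofPred_eq, Matrix.SpecialLinearGroup.transvection_add]
    exact mul_mem hx hy
  neg_mem' hx := by
    rw [Set.mem_ofPred_eq, ← Matrix.SpecialLinearGroup.transvection_inv]
    exact inv_mem hx

theorem mem_transvectionCoeffs {ι : Type*} [DecidableEq ι] [Fintype ι]
    {K : Subgroup (Matrix.SpecialLinearGroup ι R)} {i j : ι} {hij : i ≠ j} {x : R} :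
    x ∈ transvectionCoeffs K hij ↔ Matrix.SpecialLinearGroup.transvection hij x ∈ K :=
  Iff.rfl

theorem coe_transvection_one_zero (x : R) :
    (Matrix.SpecialLinearGroup.transvection (one_ne_zero' (Fin 2)) x).val = !![1, 0; x, 1] := by
  rw [Matrix.SpecialLinearGroup.transvection_coe]
  ext i j
  fin_cases i <;> fin_cases j <;> simp

theorem exists_antidiagonal_eq_upper_mul_mul_upper {g : SL(2, F)} (hg : g.val 1 0 ≠ 0) :
    ∃ x y, (upper x * g * upper y).val = !![0, -(g.val 1 0)⁻¹; g.val 1 0, 0] := by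
  refine ⟨-g.val 0 0 / g.val 1 0, -g.val 1 1 / g.val 1 0, ?_⟩
  have hdet := g.det_coe
  rw [det_fin_two] at hdet
  rw [Matrix.SpecialLinearGroup.coe_mul, Matrix.SpecialLinearGroup.coe_mul, coe_upper, coe_upper,
    eta_fin_two g.val]
  simp only [mul_fin_two, EmbeddingLike.apply_eq_iff_eq, vecCons_inj, and_true, of_apply, cons_val',
    cons_val_zero, cons_val_one, cons_val_fin_one]
  field_simp
  exact ⟨⟨by ring, by linear_combination -hdet⟩, by ring, by ring⟩

theorem antidiagonal_mul_upper {w : SL(2, F)} {c : F} (hc : c ≠ 0) (hw : w.val = !![0, -c⁻¹; c, 0])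
    (x : F) : w * upper (-x / c ^ 2) =
      Matrix.SpecialLinearGroup.transvection (one_ne_zero' (Fin 2)) x * w := by
  apply Subtype.ext
  rw [Matrix.SpecialLinearGroup.coe_mul, Matrix.SpecialLinearGroup.coe_mul, coe_upper,
    coe_transvection_one_zero, hw]
  simp only [mul_fin_two, EmbeddingLike.apply_eq_iff_eq, vecCons_inj, and_true]
  field_simp
  simp

theorem eq_top_of_transvectionCoeffs_eq_top {K : Subgroup SL(2, F)}
    (hK : transvectionCoeffs K (zero_ne_one' (Fin 2)) = ⊤) {g : SL(2, F)} (hg : g ∈ K)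
    (hg₁₀ : g.val 1 0 ≠ 0) : K = ⊤ := by
  have upper_mem (x : F) : upper x ∈ K := by
    rw [← mem_transvectionCoeffs, hK]
    trivial
  obtain ⟨x, y, hw⟩ := exists_antidiagonal_eq_upper_mul_mul_upper hg₁₀
  have hwK : upper x * g * upper y ∈ K := mul_mem (mul_mem (upper_mem x) hg) (upper_mem y)
  refine (Subgroup.eq_top_iff' K).2 fun A ↦ SL2.transvection_induction (· ∈ K) ?_
    (fun _ _ ↦ mul_mem) A
  intro i j hij z
  fin_cases i <;> fin_cases j
  · exact absurd rfl hij
  · exact upper_mem z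
  · have mul_mem_K := mul_mem hwK (upper_mem (-z / g.val 1 0 ^ 2))
    rwa [antidiagonal_mul_upper hg₁₀ hw, Subgroup.mul_mem_cancel_right K hwK] at mul_mem_K
  · exact absurd rfl hij

theorem eq_top_of_prime_card {K : Subgroup SL(2, F)} (hF : (Nat.card F).Prime) {x : F}
    (hx : x ≠ 0) (hxK : upper x ∈ K) {g : SL(2, F)} (hg : g ∈ K) (hg₁₀ : g.val 1 0 ≠ 0) :
    K = ⊤ := by
  have : Fact (Nat.card F).Prime := ⟨hF⟩
  obtain h | h := (transvectionCoeffs K (zero_ne_one' (Fin 2))).eq_bot_or_eq_top_of_prime_card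
  · have hx_mem : x ∈ transvectionCoeffs K (zero_ne_one' (Fin 2)) := hxK
    rw [h, AddSubgroup.mem_bot] at hx_mem
    exact absurd hx_mem hx
  · exact eq_top_of_transvectionCoeffs_eq_top h hg hg₁₀

end Transvections

section Torus

variable {F : Type*} [Field F]

/-- The diagonal torus `u ↦ !![u, 0; 0, u⁻¹]` of `SL(2, F)`. -/
noncomputable def torus : Fˣ →* SL(2, F) where
  toFun u := Matrix.SpecialLinearGroup.diag2 u.val u.ne_zero
  map_one' := Subtype.ext <| by
    rw [Matrix.SpecialLinearGroup.diag2_coe']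
    simp [one_fin_two]
  map_mul' u v := Subtype.ext <| by
    rw [Matrix.SpecialLinearGroup.coe_mul, Matrix.SpecialLinearGroup.diag2_coe',
      Matrix.SpecialLinearGroup.diag2_coe', Matrix.SpecialLinearGroup.diag2_coe']
    simp [mul_comm]

theorem coe_torus (u : Fˣ) : (torus u).val = !![u.val, 0; 0, u.val⁻¹] :=
  Matrix.SpecialLinearGroup.diag2_coe' u.ne_zero

theorem torus_mul_upper_mul_inv (u : Fˣ) (x : F) :
    torus u * upper x * (torus u)⁻¹ = upper (u.val ^ 2 * x) := by
  rw [mul_inv_eq_iff_eq_mul]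
  apply Subtype.ext
  rw [Matrix.SpecialLinearGroup.coe_mul, Matrix.SpecialLinearGroup.coe_mul, coe_torus, coe_upper,
    coe_upper]
  simp only [mul_fin_two, EmbeddingLike.apply_eq_iff_eq, vecCons_inj, and_true]
  field_simp
  simp

theorem transvectionCoeffs_eq_top_of_torus_le {K : Subgroup SL(2, F)} (h2 : (2 : F) ≠ 0)
    (hK : torus.range ≤ K) {x : F} (hx : x ≠ 0) (hxK : upper x ∈ K) :
    transvectionCoeffs K (zero_ne_one' (Fin 2)) = ⊤ := by
  have sq_mul_mem (s : F) : s ^ 2 * x ∈ transvectionCoeffs K (zero_ne_one' (Fin 2)) := by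
    obtain rfl | hs := eq_or_ne s 0
    · simp
    · have hsK : torus (Units.mk0 s hs) ∈ K := hK ⟨_, rfl⟩
      have conj_mem := mul_mem (mul_mem hsK hxK) (inv_mem hsK)
      rwa [torus_mul_upper_mul_inv] at conj_mem
  refine (AddSubgroup.eq_top_iff' _).2 fun y ↦ ?_
  have y_eq : y = ((y / x + 1) / 2) ^ 2 * x - ((y / x - 1) / 2) ^ 2 * x := by
    field_simp
    ring
  rw [y_eq]
  exact sub_mem (sq_mul_mem _) (sq_mul_mem _)

theorem exists_upper_mem_of_torus_le {K : Subgroup SL(2, F)} (hK : torus.range ≤ K) {f : SL(2, F)}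
    (hf : f ∈ K) (hf₁₀ : f.val 1 0 = 0) (hf₀₁ : f.val 0 1 ≠ 0) : ∃ x ≠ 0, upper x ∈ K := by
  have hdet : f.val 0 0 * f.val 1 1 = 1 := by
    have det_eq_one := f.det_coe
    rwa [det_fin_two, hf₁₀, mul_zero, sub_zero] at det_eq_one
  have hf₀₀ : f.val 0 0 ≠ 0 := left_ne_zero_of_mul_eq_one hdet
  refine ⟨f.val 0 1 / f.val 0 0, div_ne_zero hf₀₁ hf₀₀, ?_⟩
  have f_eq : torus (Units.mk0 _ hf₀₀) * upper (f.val 0 1 / f.val 0 0) = f := by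
    apply Subtype.ext
    rw [Matrix.SpecialLinearGroup.coe_mul, coe_torus, coe_upper]
    ext i j
    fin_cases i <;> fin_cases j <;>
      simp [mul_div_cancel₀, hf₀₀, hf₁₀, ← eq_inv_of_mul_eq_one_right hdet]
  rw [← f_eq] at hf
  exact (Subgroup.mul_mem_cancel_left K (hK ⟨_, rfl⟩)).1 hf

theorem exists_upper_mem_of_torus_mul {K : Subgroup SL(2, F)} (hK : torus.range ≤ K)
    {h h' : SL(2, F)} (hh : h ∈ K) (hh' : h' ∈ K) {s : Fˣ}
    (hs : s.val ^ 2 * (h.val 0 0 * h'.val 1 0) = h'.val 0 0 * h.val 1 0)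
    (hne : h.val 0 0 * h.val 1 1 ≠ h'.val 0 0 * h'.val 1 1) : ∃ x ≠ 0, upper x ∈ K := by
  have hfK : h'⁻¹ * torus s * h ∈ K := mul_mem (mul_mem (inv_mem hh') (hK ⟨s, rfl⟩)) hh
  have hf : (h'⁻¹ * torus s * h).val = !![h'.val 1 1, -h'.val 0 1; -h'.val 1 0, h'.val 0 0] *
      !![s.val, 0; 0, s.val⁻¹] * h.val := by
    rw [Matrix.SpecialLinearGroup.coe_mul, Matrix.SpecialLinearGroup.coe_mul, coe_torus,
      Matrix.SpecialLinearGroup.coe_inv, adjugate_fin_two]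
  have hf₁₀ : s.val * (h'⁻¹ * torus s * h).val 1 0 =
      h'.val 0 0 * h.val 1 0 - s.val ^ 2 * (h.val 0 0 * h'.val 1 0) := by
    simp only [hf, Matrix.mul_apply, Fin.sum_univ_two, of_apply, cons_val', cons_val_zero,
      cons_val_one, cons_val_fin_one]
    field_simp
    ring
  have hf₀₁ : s.val * (h'⁻¹ * torus s * h).val 0 1 =
      s.val ^ 2 * (h.val 0 1 * h'.val 1 1) - h'.val 0 1 * h.val 1 1 := by
    simp only [hf, Matrix.mul_apply, Fin.sum_univ_two, of_apply, cons_val', cons_val_zero,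
      cons_val_one, cons_val_fin_one]
    field_simp
    ring
  refine exists_upper_mem_of_torus_le hK hfK ?_ fun h₀₁ ↦ hne ?_
  · rwa [hs, sub_self, mul_eq_zero_iff_left s.ne_zero] at hf₁₀
  · rw [h₀₁, mul_zero] at hf₀₁
    have hdet := h.det_coe
    have hdet' := h'.det_coe
    rw [det_fin_two] at hdet hdet'
    linear_combination (-(h.val 0 0 * h.val 1 1)) * hdet' + (h'.val 0 0 * h'.val 1 1) * hdet -
      (h.val 0 1 * h'.val 1 1) * hs - (h.val 0 0 * h'.val 1 0) * hf₀₁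

theorem exists_sq_mul_eq_of_quadraticChar_eq [Fintype F] [DecidableEq F] {x y : F}
    (h : quadraticChar F x = quadraticChar F y) : ∃ s : Fˣ, s.val ^ 2 * x = y := by
  obtain rfl | hx := eq_or_ne x 0
  · rw [quadraticChar_zero, eq_comm, quadraticChar_eq_zero_iff] at h
    exact ⟨1, by rw [h, mul_zero]⟩
  · have hy : y ≠ 0 := by rwa [Ne, ← quadraticChar_eq_zero_iff, ← h, quadraticChar_eq_zero_iff]
    obtain ⟨t, ht⟩ : IsSquare (x * y) := by
      rw [← quadraticChar_one_iff_isSquare (mul_ne_zero hx hy), map_mul, ← h, ← sq,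
        quadraticChar_sq_one hx]
    have ht0 : t ≠ 0 := left_ne_zero_of_mul (ht ▸ mul_ne_zero hx hy)
    refine ⟨Units.mk0 (t / x) (div_ne_zero ht0 hx), ?_⟩
    rw [Units.val_mk0, div_pow, sq t, ← ht]
    field_simp

theorem exists_ne_sq_mul_eq [Finite F] {ι : Type*} [Fintype ι] (hι : 3 < Fintype.card ι)
    (f : ι → F) : ∃ i j, i ≠ j ∧ ∃ s : Fˣ, s.val ^ 2 * f i = f j := by
  classical
  have := Fintype.ofFinite F
  have maps_to (i : ι) (_ : i ∈ Finset.univ) :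
      quadraticChar F (f i) ∈ ({0, 1, -1} : Finset ℤ) := by
    simpa using quadraticChar_isQuadratic F (f i)
  obtain ⟨i, -, j, -, hij, h⟩ := Finset.exists_ne_map_eq_of_card_lt_of_maps_to
    (by simpa using hι) maps_to
  exact ⟨i, j, hij, exists_sq_mul_eq_of_quadraticChar_eq h⟩

theorem coe_mul_torus_mul_inv (g : SL(2, F)) (u : Fˣ) : (g * torus u * g⁻¹).val =
    !![g.val 0 0 * g.val 1 1 * u.val - g.val 0 1 * g.val 1 0 * u.val⁻¹,
        g.val 0 0 * g.val 0 1 * (u.val⁻¹ - u.val);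
      g.val 1 0 * g.val 1 1 * (u.val - u.val⁻¹),
        g.val 0 0 * g.val 1 1 * u.val⁻¹ - g.val 0 1 * g.val 1 0 * u.val] := by
  rw [Matrix.SpecialLinearGroup.coe_mul, Matrix.SpecialLinearGroup.coe_mul, coe_torus,
    Matrix.SpecialLinearGroup.coe_inv, adjugate_fin_two, eta_fin_two g.val]
  simp only [mul_fin_two, EmbeddingLike.apply_eq_iff_eq, vecCons_inj, and_true, of_apply, cons_val',
    cons_val_zero, cons_val_one, cons_val_fin_one]
  exact ⟨⟨by ring, by ring⟩, by ring, by ring⟩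

theorem conj_torus_diag_mul_ne {g : SL(2, F)} (hg : ∀ i j, g.val i j ≠ 0) {u v : Fˣ}
    (hmul : (u * v) ^ 2 ≠ 1) (hne : u ^ 2 ≠ v ^ 2) :
    (g * torus u * g⁻¹).val 0 0 * (g * torus u * g⁻¹).val 1 1 ≠
      (g * torus v * g⁻¹).val 0 0 * (g * torus v * g⁻¹).val 1 1 := by
  have diag_mul (w : Fˣ) : (g * torus w * g⁻¹).val 0 0 * (g * torus w * g⁻¹).val 1 1 =
      1 - g.val 0 0 * g.val 0 1 * g.val 1 0 * g.val 1 1 * (w.val - w.val⁻¹) ^ 2 := by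
    have hdet := (g * torus w * g⁻¹).det_coe
    rw [det_fin_two, sub_eq_iff_eq_add] at hdet
    rw [hdet, coe_mul_torus_mul_inv]
    simp only [of_apply, cons_val', cons_val_zero, cons_val_one, cons_val_fin_one]
    ring
  have prod_ne_zero : g.val 0 0 * g.val 0 1 * g.val 1 0 * g.val 1 1 ≠ 0 := by
    simp only [ne_eq, mul_eq_zero, hg, or_self, not_false_eq_true]
  rw [diag_mul, diag_mul, Ne, sub_right_inj, mul_right_inj' prod_ne_zero]
  intro h
  have factors : ((u.val * v.val) ^ 2 - 1) * (u.val ^ 2 - v.val ^ 2) = 0 := by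
    field_simp at h
    linear_combination h
  rw [mul_eq_zero, sub_eq_zero, sub_eq_zero] at factors
  obtain h_mul | h_eq := factors
  · exact hmul (Units.ext (by push_cast; exact h_mul))
  · exact hne (Units.ext (by push_cast; exact h_eq))

theorem exists_upper_mem_of_fifteen_lt_orderOf [Finite F] {K : Subgroup SL(2, F)}
    (hK : torus.range ≤ K) {g : SL(2, F)} (hg : g ∈ K) (hg0 : ∀ i j, g.val i j ≠ 0) {z : Fˣ}
    (hz : 15 < orderOf z) : ∃ x ≠ 0, upper x ∈ K := by
  -- By pigeonhole on square classes, two of the four conjugates `h i` can be matched by a torus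
  -- element so that their quotient is upper triangular; it is not diagonal because the products of
  -- their diagonal entries differ.
  let h (i : Fin 4) : SL(2, F) := g * torus (z ^ (i.val + 1)) * g⁻¹
  have hhK (i : Fin 4) : h i ∈ K := mul_mem (mul_mem hg (hK ⟨_, rfl⟩)) (inv_mem hg)
  have pow_ne_one {n : ℕ} (hn0 : n ≠ 0) (hn : n < 16) : z ^ n ≠ 1 :=
    pow_ne_one_of_lt_orderOf hn0 (by lia)
  have h₁₀ (i : Fin 4) : (h i).val 1 0 ≠ 0 := by
    simp only [h, coe_mul_torus_mul_inv]
    refine mul_ne_zero (mul_ne_zero (hg0 1 0) (hg0 1 1)) (sub_ne_zero.2 fun huu ↦ ?_)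
    rw [← Units.val_inv_eq_inv_val, Units.val_inj, ← mul_eq_one_iff_eq_inv, ← pow_add] at huu
    exact pow_ne_one (by lia) (by lia) huu
  have hne {i j : Fin 4} (hij : i ≠ j) :
      (h i).val 0 0 * (h i).val 1 1 ≠ (h j).val 0 0 * (h j).val 1 1 := by
    refine conj_torus_diag_mul_ne hg0 ?_ ?_
    · rw [← pow_add, ← pow_mul]
      exact pow_ne_one (by lia) (by lia)
    · rw [← pow_mul, ← pow_mul]
      exact pow_injOn_Iio_orderOf.ne (Set.mem_Iio.2 (by lia)) (Set.mem_Iio.2 (by lia)) (by lia)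
  obtain ⟨i, j, hij, s, hs⟩ := exists_ne_sq_mul_eq (by simp)
    (fun i ↦ (h i).val 0 0 / (h i).val 1 0)
  refine exists_upper_mem_of_torus_mul hK (hhK i) (hhK j) (s := s) ?_ (hne hij)
  rwa [← mul_div_assoc, div_eq_div_iff (h₁₀ i) (h₁₀ j), mul_assoc] at hs

theorem eq_top_of_torus_generator_mem [Finite F] {K : Subgroup SL(2, F)} (h2 : (2 : F) ≠ 0)
    {z : Fˣ} (hz : ∀ u, u ∈ Subgroup.zpowers z) (hz_order : 15 < orderOf z) (hzK : torus z ∈ K)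
    {g : SL(2, F)} (hg : g ∈ K) (hg0 : ∀ i j, g.val i j ≠ 0) : K = ⊤ := by
  have torus_le : torus.range ≤ K := by
    rintro _ ⟨u, rfl⟩
    obtain ⟨n, rfl⟩ := hz u
    rw [map_zpow]
    exact zpow_mem hzK n
  obtain ⟨x, hx, hxK⟩ := exists_upper_mem_of_fifteen_lt_orderOf torus_le hg hg0 hz_order
  exact eq_top_of_transvectionCoeffs_eq_top
    (transvectionCoeffs_eq_top_of_torus_le h2 torus_le hx hxK) hg (hg0 1 0)

end Torus

section GeneratingPairs

variable {F : Type*} [Field F]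

theorem exists_closure_eq_top_of_prime_card (hF : (Nat.card F).Prime) :
    ∃ A B : SL(2, F), Subgroup.closure {A, B} = ⊤ ∧ A.val.trace = 0 ∧ B.val.trace = 2 := by
  refine ⟨ModularGroup.S, upper 1, ?_, trace_S, trace_upper 1⟩
  refine eq_top_of_prime_card hF one_ne_zero (Subgroup.subset_closure (by simp))
    (g := ModularGroup.S) (Subgroup.subset_closure (by simp)) ?_
  rw [coe_S]
  exact one_ne_zero

theorem exists_closure_eq_top_not_isSquare_of_card_mod_four [Fintype F]
    (hF : (Fintype.card F).Prime) (h4 : Fintype.card F % 4 = 3) (h12 : (12 : F) ≠ 0) :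
    ∃ A B : SL(2, F), Subgroup.closure {A, B} = ⊤ ∧ ¬IsSquare (commDiscr A.val B.val) := by
  obtain ⟨A, hA⟩ : ∃ A : SL(2, F), A.val = !![2, 1; 1, 1] :=
    ⟨⟨_, by rw [det_fin_two_of]; norm_num⟩, rfl⟩
  obtain ⟨B, hB⟩ : ∃ B : SL(2, F), B.val = !![2, -1; -1, 1] :=
    ⟨⟨_, by rw [det_fin_two_of]; norm_num⟩, rfl⟩
  have hAK : A ∈ Subgroup.closure {A, B} := Subgroup.subset_closure (by simp)
  have hBK : B ∈ Subgroup.closure {A, B} := Subgroup.subset_closure (by simp)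
  have upper_eq : (A * B * A⁻¹ * B⁻¹) ^ 2 = upper 12 := by
    apply Subtype.ext
    simp only [sq, Matrix.SpecialLinearGroup.coe_mul, Matrix.SpecialLinearGroup.coe_inv, hA, hB,
      adjugate_fin_two_of, coe_upper, mul_fin_two]
    norm_num
  refine ⟨A, B, eq_top_of_prime_card (by rwa [Nat.card_eq_fintype_card]) h12 ?_ hAK ?_, ?_⟩
  · rw [← upper_eq]
    exact pow_mem (mul_mem (mul_mem (mul_mem hAK hBK) (inv_mem hAK)) (inv_mem hBK)) 2
  · rw [hA]
    exact one_ne_zero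
  · have commDiscr_eq : commDiscr A.val B.val = 2 ^ 2 * -1 := by
      simp only [commDiscr, Ring.lie_def, hA, hB, det_fin_two, Matrix.sub_apply, mul_fin_two]
      norm_num
    have h2 : (2 : F) ≠ 0 := fun h ↦ h12 (by linear_combination 6 * h)
    rintro ⟨t, ht⟩
    refine (FiniteField.isSquare_neg_one_iff.1 ⟨t / 2, ?_⟩) h4
    field_simp
    linear_combination -commDiscr_eq + ht

theorem exists_closure_eq_top_not_isSquare_of_card_eq_thirteen [Fintype F]
    (hF : Fintype.card F = 13) :
    ∃ A B : SL(2, F), Subgroup.closure {A, B} = ⊤ ∧ ¬IsSquare (commDiscr A.val B.val) := by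
  obtain ⟨A, hA⟩ : ∃ A : SL(2, F), A.val = !![0, -1; 1, -1] :=
    ⟨⟨_, by rw [det_fin_two_of]; norm_num⟩, rfl⟩
  obtain ⟨B, hB⟩ : ∃ B : SL(2, F), B.val = !![1, 1; 3, 4] :=
    ⟨⟨_, by rw [det_fin_two_of]; norm_num⟩, rfl⟩
  have hAK : A ∈ Subgroup.closure {A, B} := Subgroup.subset_closure (by simp)
  have hBK : B ∈ Subgroup.closure {A, B} := Subgroup.subset_closure (by simp)
  have h13 : (13 : F) = 0 := by exact_mod_cast hF ▸ Nat.cast_card_eq_zero F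
  have h4 : (-4 : F) ≠ 0 := fun h ↦ one_ne_zero (α := F) (by linear_combination h13 + 3 * h)
  have upper_eq : B * A⁻¹ * B⁻¹ * A * B = upper (-4) := by
    apply Subtype.ext
    simp only [Matrix.SpecialLinearGroup.coe_mul, Matrix.SpecialLinearGroup.coe_inv, hA, hB,
      adjugate_fin_two_of, coe_upper, mul_fin_two, EmbeddingLike.apply_eq_iff_eq, vecCons_inj,
      and_true]
    exact ⟨⟨by linear_combination 2 * h13, by linear_combination 3 * h13⟩,
      by linear_combination 7 * h13, by linear_combination 9 * h13⟩
  refine ⟨A, B, eq_top_of_prime_card (by rw [Nat.card_eq_fintype_card, hF]; norm_num) h4 ?_ hAK ?_,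
    ?_⟩
  · rw [← upper_eq]
    exact mul_mem (mul_mem (mul_mem (mul_mem hBK (inv_mem hAK)) (inv_mem hBK)) hAK) hBK
  · rw [hA]
    exact one_ne_zero
  · have commDiscr_eq : commDiscr A.val B.val = 2 := by
      simp only [commDiscr, Ring.lie_def, hA, hB, det_fin_two, Matrix.sub_apply, mul_fin_two,
        of_apply, cons_val', cons_val_zero, cons_val_one, cons_val_fin_one]
      linear_combination 2 * h13
    rw [commDiscr_eq, FiniteField.isSquare_two_iff, hF]
    norm_num

theorem exists_units_generator_fifteen_lt_orderOf [Fintype F] (hF : 17 ≤ Fintype.card F) :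
    ∃ z : Fˣ, (∀ u, u ∈ Subgroup.zpowers z) ∧ 15 < orderOf z := by
  obtain ⟨z, hz⟩ := IsCyclic.exists_generator (α := Fˣ)
  refine ⟨z, hz, ?_⟩
  rw [orderOf_eq_card_of_forall_mem_zpowers hz, Nat.card_units, Nat.card_eq_fintype_card]
  lia

theorem exists_closure_eq_top_of_seventeen_le [Fintype F] (hF : 17 ≤ Fintype.card F)
    (h2 : ringChar F ≠ 2) :
    ∃ A B : SL(2, F), Subgroup.closure {A, B} = ⊤ ∧ A.val.trace = 0 ∧ B.val.trace = 2 := by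
  obtain ⟨z, hz, hz_order⟩ := exists_units_generator_fifteen_lt_orderOf hF
  have z_sq_ne_one : z.val ^ 2 ≠ 1 :=
    pow_ne_one_of_lt_orderOf two_ne_zero (by rw [orderOf_units]; lia)
  have z_pow_four_ne_one : z.val ^ 4 ≠ 1 :=
    pow_ne_one_of_lt_orderOf four_ne_zero (by rw [orderOf_units]; lia)
  have sq_sub_ne_zero : z.val ^ 2 - 1 ≠ 0 := sub_ne_zero.2 z_sq_ne_one
  have sq_add_ne_zero : z.val ^ 2 + 1 ≠ 0 := fun h ↦
    z_pow_four_ne_one (by linear_combination (z.val ^ 2 - 1) * h)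
  -- The diagonal of `B` is forced by `tr B = 2` and `tr (torus z * B) = 0`.
  obtain ⟨B, hB⟩ : ∃ B : SL(2, F), B.val = !![-2 / (z.val ^ 2 - 1), 1;
      -((z.val ^ 2 + 1) / (z.val ^ 2 - 1)) ^ 2, 2 * z.val ^ 2 / (z.val ^ 2 - 1)] :=
    ⟨⟨_, by rw [det_fin_two_of]; field_simp; ring⟩, rfl⟩
  refine ⟨torus z * B, B, ?_, ?_, ?_⟩
  · have hBK : B ∈ Subgroup.closure {torus z * B, B} := Subgroup.subset_closure (by simp)
    have hzBK : torus z * B ∈ Subgroup.closure {torus z * B, B} :=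
      Subgroup.subset_closure (by simp)
    refine eq_top_of_torus_generator_mem (Ring.two_ne_zero h2) hz hz_order
      ((Subgroup.mul_mem_cancel_right _ hBK).1 hzBK) hBK fun i j ↦ ?_
    rw [hB]
    fin_cases i <;> fin_cases j <;>
      simp [sq_sub_ne_zero, sq_add_ne_zero, Ring.two_ne_zero h2]
  · rw [Matrix.SpecialLinearGroup.coe_mul, coe_torus, hB, mul_fin_two, trace_fin_two_of]
    field_simp
    ring
  · rw [hB, trace_fin_two_of]
    field_simp
    ring

theorem exists_closure_eq_top_not_isSquare_of_seventeen_le [Fintype F] (hF : 17 ≤ Fintype.card F)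
    (h2 : ringChar F ≠ 2) :
    ∃ A B : SL(2, F), Subgroup.closure {A, B} = ⊤ ∧ ¬IsSquare (commDiscr A.val B.val) := by
  obtain ⟨z, hz, hz_order⟩ := exists_units_generator_fifteen_lt_orderOf hF
  have z_sq_ne_one : z.val ^ 2 ≠ 1 :=
    pow_ne_one_of_lt_orderOf two_ne_zero (by rw [orderOf_units]; lia)
  obtain ⟨n, hn⟩ := FiniteField.exists_nonsquare (F := F) h2
  have hn0 : n ≠ 0 := by
    rintro rfl
    exact hn .zero
  have hn1 : 1 - n ≠ 0 := by
    rw [sub_ne_zero]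
    rintro rfl
    exact hn .one
  obtain ⟨B, hB⟩ : ∃ B : SL(2, F), B.val = !![1 - n, 1; -n, 1] :=
    ⟨⟨_, by rw [det_fin_two_of]; ring⟩, rfl⟩
  refine ⟨torus z, B, ?_, ?_⟩
  · refine eq_top_of_torus_generator_mem (Ring.two_ne_zero h2) hz hz_order
      (Subgroup.subset_closure (by simp)) (g := B) (Subgroup.subset_closure (by simp)) fun i j ↦ ?_
    rw [hB]
    fin_cases i <;> fin_cases j <;> simp [hn0, hn1]
  · have commDiscr_eq : commDiscr (torus z).val B.val = n * (z.val - z.val⁻¹) ^ 2 := by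
      simp only [commDiscr, Ring.lie_def, coe_torus, hB, det_fin_two, Matrix.sub_apply,
        mul_fin_two, of_apply, cons_val', cons_val_zero, cons_val_one, cons_val_fin_one]
      ring
    have sub_inv_ne_zero : z.val - z.val⁻¹ ≠ 0 := by
      rwa [Ne, sub_eq_zero, ← mul_eq_one_iff_eq_inv₀ z.ne_zero, ← sq]
    rw [commDiscr_eq]
    intro h
    have isSquare_div := h.div (IsSquare.sq (z.val - z.val⁻¹))
    rw [mul_div_cancel_right₀ _ (pow_ne_zero 2 sub_inv_ne_zero)] at isSquare_div
    exact hn isSquare_div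

theorem card_eq_or_seventeen_le [Fintype F] (h2 : ringChar F ≠ 2) (h7 : 7 ≤ Fintype.card F)
    (h9 : Fintype.card F ≠ 9) : Fintype.card F = 7 ∨ Fintype.card F = 11 ∨ Fintype.card F = 13 ∨
      17 ≤ Fintype.card F := by
  have card_odd : Fintype.card F % 2 = 1 := FiniteField.odd_card_of_char_ne_two h2
  have card_ne_fifteen : Fintype.card F ≠ 15 := by
    intro h
    have isPrimePow_fifteen := h ▸ FiniteField.isPrimePow_card F
    obtain ⟨ℓ, -, eq_ℓ⟩ := isPrimePow_iff_unique_prime_dvd.1 isPrimePow_fifteen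
    have h3 := eq_ℓ 3 ⟨Nat.prime_three, by norm_num⟩
    have h5 := eq_ℓ 5 ⟨Nat.prime_five, by norm_num⟩
    lia
  lia

theorem exists_closure_eq_top [Fintype F] (h2 : ringChar F ≠ 2) (h7 : 7 ≤ Fintype.card F)
    (h9 : Fintype.card F ≠ 9) :
    ∃ A B : SL(2, F), Subgroup.closure {A, B} = ⊤ ∧ A.val.trace = 0 ∧ B.val.trace = 2 := by
  rcases card_eq_or_seventeen_le h2 h7 h9 with h | h | h | h
  iterate 3
    · refine exists_closure_eq_top_of_prime_card ?_
      rw [Nat.card_eq_fintype_card, h]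
      norm_num
  · exact exists_closure_eq_top_of_seventeen_le h h2

theorem exists_closure_eq_top_not_isSquare [Fintype F] (h2 : ringChar F ≠ 2)
    (h7 : 7 ≤ Fintype.card F) (h9 : Fintype.card F ≠ 9) :
    ∃ A B : SL(2, F), Subgroup.closure {A, B} = ⊤ ∧ ¬IsSquare (commDiscr A.val B.val) := by
  have cast_card := Nat.cast_card_eq_zero F
  rcases card_eq_or_seventeen_le h2 h7 h9 with h | h | h | h
  · refine exists_closure_eq_top_not_isSquare_of_card_mod_four (by norm_num [h]) (by norm_num [h])
      fun h12 ↦ one_ne_zero (α := F) ?_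
    rw [h] at cast_card
    push_cast at cast_card
    linear_combination 3 * h12 - 5 * cast_card
  · refine exists_closure_eq_top_not_isSquare_of_card_mod_four (by norm_num [h]) (by norm_num [h])
      fun h12 ↦ one_ne_zero (α := F) ?_
    rw [h] at cast_card
    push_cast at cast_card
    linear_combination h12 - cast_card
  · exact exists_closure_eq_top_not_isSquare_of_card_eq_thirteen h
  · exact exists_closure_eq_top_not_isSquare_of_seventeen_le h h2

end GeneratingPairs

section ProjectiveGeneration

variable {R : Type*} [CommRing R]

theorem closure_mk_eq_top {A B : SL(2, R)}
    (h : Subgroup.closure {A, B} = ⊤) :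
    Subgroup.closure {(A : PSL(2, R)), (B : PSL(2, R))} = ⊤ := by
  have map_closure := MonoidHom.map_closure (QuotientGroup.mk' (Subgroup.center SL(2, R))) {A, B}
  rwa [h, Subgroup.map_top_of_surjective _ (QuotientGroup.mk'_surjective _), Set.image_pair,
    eq_comm] at map_closure

theorem exists_surjective_coprod_cyc_hom [IsDomain R] (p : ℕ) [Fact p.Prime]
    [CharP R p] {A B : SL(2, R)} (h : Subgroup.closure {A, B} = ⊤) (hA : A.val.trace = 0)
    (hB : B.val.trace = 2) :
    ∃ φ : Monoid.Coprod (Cyc 2) (Cyc p) →* PSL(2, R), Function.Surjective φ := by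
  have hB_pow : (B : PSL(2, R)) ^ p = 1 := by
    rw [← QuotientGroup.mk_pow, pow_char_eq_one_of_trace_eq_two p hB, QuotientGroup.mk_one]
  obtain ⟨φ, hφA, hφB⟩ := exists_coprod_cyc_hom (mk_sq_eq_one_of_trace_eq_zero hA) hB_pow
  refine ⟨φ, MonoidHom.range_eq_top.1 (top_le_iff.1 ?_)⟩
  rw [← closure_mk_eq_top h, Subgroup.closure_le]
  rintro _ (rfl | rfl)
  exacts [⟨_, hφA⟩, ⟨_, hφB⟩]

end ProjectiveGeneration

/-- for `G = C_2 ∗ C_p` and `H = PSL(2,q)` where `q = p^k` is a power of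
a prime `p ≥ 3` with `q ≥ 7`, `q ≠ 9`, the group `H` is a homomorphic image of `G`,
and some generating pair of `H` does not lift to a generating pair of `G` along any
homomorphism `G → H`. -/
theorem stmt1 (p k : ℕ) (hp : p.Prime) (hp3 : 3 ≤ p)
    (F : Type) [Field F] [Fintype F] (hcard : Fintype.card F = p ^ k)
    (hq7 : 7 ≤ p ^ k) (hq9 : p ^ k ≠ 9) :
    (∃ φ : Monoid.Coprod (Cyc 2) (Cyc p) →* PSL2 F, Function.Surjective φ) ∧
    ∃ h1 h2 : PSL2 F, Subgroup.closure {h1, h2} = ⊤ ∧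
      ∀ (θ : Monoid.Coprod (Cyc 2) (Cyc p) →* PSL2 F)
        (g1 g2 : Monoid.Coprod (Cyc 2) (Cyc p)),
        Subgroup.closure {g1, g2} = ⊤ → (θ g1, θ g2) ≠ (h1, h2) := by
  have := Fact.mk hp
  have := charP_of_card_eq_prime_pow hcard
  have h2 : ringChar F ≠ 2 := by
    rw [ringChar.eq F p]
    lia
  rw [← hcard] at hq7 hq9
  constructor
  · obtain ⟨A, B, hAB, hA, hB⟩ := exists_closure_eq_top h2 hq7 hq9
    exact exists_surjective_coprod_cyc_hom p hAB hA hB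
  · obtain ⟨A, B, hAB, not_isSquare⟩ := exists_closure_eq_top_not_isSquare h2 hq7 hq9
    refine ⟨A, B, closure_mk_eq_top hAB, fun θ g1 g2 hg h ↦ not_isSquare ?_⟩
    obtain ⟨hA, hB⟩ := Prod.mk.inj h
    exact isSquare_commDiscr_of_closure_eq_top p hg hA hB
end

section
/- Let m, n be positive integers, G = C_m ∗ C_n, let H be a homomorphic image of G (there is a surjective group homomorphism G → H), and let (h1,h2) be a generating pair of H. Then there exist a group homomorphism θ : G → H and a generating pair (g1,g2) of G with θ(g1) = h1 and θ(g2) = h2 if and only if there exists a generating pair (h̃1,h̃2) of H that is Nielsen equivalent to (h1,h2) and satisfies h̃1^m = h̃2^n = 1. -/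
/-- `η_{h1,h2} : F → H`, the homomorphism from the free group of rank 2 sending the
two generators to `h1` and `h2`. -/
noncomputable def eta {H : Type*} [Group H] (p : H × H) : FreeGroup (Fin 2) →* H :=
  FreeGroup.lift ![p.1, p.2]

/-- Two pairs of elements of `H` are Nielsen equivalent if they lie in the same
`Aut(F)`-orbit, i.e. `η_{p'} = η_p ∘ α` for some automorphism `α` of the free
group `F` of rank 2. -/
def NielsenEquiv {H : Type*} [Group H] (p p' : H × H) : Prop :=
  ∃ α : FreeGroup (Fin 2) ≃* FreeGroup (Fin 2), eta p' = (eta p).comp α.toMonoidHom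

/-!
Pairs with `g₁ ^ m = g₂ ^ n = 1` in a quotient of `C_m ∗ C_n` lift to the free product, and Nielsen
moves commute with homomorphisms. So everything reduces to showing that a generating pair of a free
product of two cyclic groups is Nielsen equivalent to a pair of conjugates of elements of the two
factors.

The syllable length makes a free product look like a tree, on which an element is either hyperbolic
or conjugate into a factor. In a generating pair of minimal length in its Nielsen class, the
cancellations on the two sides of a letter never meet; if both elements were hyperbolic, every
nonempty reduced word in them would have length at least two, and the pair would miss the factors.
Hence some equivalent pair `(u, v)` has `u` in a factor. Now shorten `v` while keeping the first
element in that factor. If `v` stays hyperbolic, the blocks `v ^ (± 1) * u ^ k` cancel so little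
against each other that no element of the other factor is a word in `u` and `v`. Therefore `v` is
conjugate into a factor too, necessarily a different one.
-/

section Eta

variable {G K : Type*} [Group G] [Group K]

@[simp]
theorem eta_of_zero (p : G × G) : eta p (FreeGroup.of 0) = p.1 := by simp [eta]

@[simp]
theorem eta_of_one (p : G × G) : eta p (FreeGroup.of 1) = p.2 := by simp [eta]

theorem freeGroup_fin_two_hom_ext {f g : FreeGroup (Fin 2) →* G}
    (h₀ : f (FreeGroup.of 0) = g (FreeGroup.of 0))
    (h₁ : f (FreeGroup.of 1) = g (FreeGroup.of 1)) : f = g := by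
  ext i
  fin_cases i
  exacts [h₀, h₁]

theorem eta_map (θ : G →* K) (p : G × G) : eta (p.map θ θ) = θ.comp (eta p) :=
  freeGroup_fin_two_hom_ext (by simp) (by simp)

theorem eta_surjective_iff (p : G × G) :
    Function.Surjective (eta p) ↔ Subgroup.closure {p.1, p.2} = ⊤ := by
  rw [← MonoidHom.range_eq_top, eta, FreeGroup.range_lift_eq_closure, Matrix.range_cons_cons_empty]

theorem closure_map_eq_top {θ : G →* K} (hθ : Function.Surjective θ) {p : G × G}
    (hp : Subgroup.closure {p.1, p.2} = ⊤) : Subgroup.closure {θ p.1, θ p.2} = ⊤ := by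
  rw [← Set.image_pair, ← MonoidHom.map_closure, hp, Subgroup.map_top_of_surjective θ hθ]

end Eta

namespace NielsenEquiv

variable {G K : Type*} [Group G] [Group K]

theorem refl (p : G × G) : NielsenEquiv p p := ⟨MulEquiv.refl _, by ext; rfl⟩

theorem symm {p q : G × G} : NielsenEquiv p q → NielsenEquiv q p := by
  rintro ⟨α, h⟩
  exact ⟨α.symm, by ext; simp [h]⟩

theorem trans {p q r : G × G} : NielsenEquiv p q → NielsenEquiv q r → NielsenEquiv p r := by
  rintro ⟨α, hq⟩ ⟨β, hr⟩
  exact ⟨β.trans α, by ext; simp [hq, hr]⟩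

theorem map (θ : G →* K) {p q : G × G} :
    NielsenEquiv p q → NielsenEquiv (p.map θ θ) (q.map θ θ) := by
  rintro ⟨α, h⟩
  exact ⟨α, by rw [eta_map, eta_map, h, MonoidHom.comp_assoc]⟩

theorem exists_lift (θ : G →* K) {p : G × G} {q : K × K} (h : NielsenEquiv (p.map θ θ) q) :
    ∃ p', NielsenEquiv p p' ∧ p'.map θ θ = q := by
  obtain ⟨α, h⟩ := h
  rw [eta_map] at h
  refine ⟨(eta p (α (FreeGroup.of 0)), eta p (α (FreeGroup.of 1))),
    ⟨α, freeGroup_fin_two_hom_ext (by simp) (by simp)⟩, Prod.ext ?_ ?_⟩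
  · simpa using (DFunLike.congr_fun h (FreeGroup.of 0)).symm
  · simpa using (DFunLike.congr_fun h (FreeGroup.of 1)).symm

theorem closure_eq_top {p q : G × G} (h : NielsenEquiv p q)
    (hp : Subgroup.closure {p.1, p.2} = ⊤) : Subgroup.closure {q.1, q.2} = ⊤ := by
  obtain ⟨α, h⟩ := h
  rw [← eta_surjective_iff] at hp ⊢
  rw [h]
  exact hp.comp α.surjective

theorem of_inverse {p q : FreeGroup (Fin 2) × FreeGroup (Fin 2)}
    (hpq : q.map (eta p) (eta p) = (FreeGroup.of 0, FreeGroup.of 1))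
    (hqp : p.map (eta q) (eta q) = (FreeGroup.of 0, FreeGroup.of 1)) (r : G × G) :
    NielsenEquiv r (eta r p.1, eta r p.2) := by
  rw [Prod.ext_iff] at hpq hqp
  exact ⟨MonoidHom.toMulEquiv (eta p) (eta q)
    (freeGroup_fin_two_hom_ext (by simpa using hqp.1) (by simpa using hqp.2))
    (freeGroup_fin_two_hom_ext (by simpa using hpq.1) (by simpa using hpq.2)),
    freeGroup_fin_two_hom_ext (by simp) (by simp)⟩

theorem swap (u v : G) : NielsenEquiv (u, v) (v, u) := by
  simpa using of_inverse (p := (FreeGroup.of 1, FreeGroup.of 0))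
    (q := (FreeGroup.of 1, FreeGroup.of 0)) (by simp) (by simp) (u, v)

theorem inv_left (u v : G) : NielsenEquiv (u, v) (u⁻¹, v) := by
  simpa using of_inverse (p := ((FreeGroup.of 0)⁻¹, FreeGroup.of 1))
    (q := ((FreeGroup.of 0)⁻¹, FreeGroup.of 1)) (by simp) (by simp) (u, v)

theorem inv_right (u v : G) : NielsenEquiv (u, v) (u, v⁻¹) :=
  (swap u v).trans ((inv_left v u).trans (swap _ _))

theorem mul_right (u v : G) : NielsenEquiv (u, v) (u, u * v) := by
  have h := of_inverse (p := (FreeGroup.of 0, FreeGroup.of 0 * FreeGroup.of 1))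
    (q := (FreeGroup.of 0, (FreeGroup.of 0)⁻¹ * FreeGroup.of 1)) (by simp) (by simp) (u, v)
  rwa [map_mul, eta_of_zero, eta_of_one] at h

theorem zpow_mul_right (u v : G) (k : ℤ) : NielsenEquiv (u, v) (u, u ^ k * v) := by
  induction k with
  | zero => simpa using refl (u, v)
  | succ k ih =>
    have h := ih.trans (mul_right u _)
    rwa [← mul_assoc, ← zpow_one_add, add_comm] at h
  | pred k ih =>
    have h := mul_right u (u ^ (-(k : ℤ) - 1) * v)
    rw [← mul_assoc, ← zpow_one_add, add_sub_cancel] at h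
    exact ih.trans h.symm

theorem mul_right_of_mem_zpowers {u s : G} (hs : s ∈ Subgroup.zpowers u) (v : G) :
    NielsenEquiv (u, v) (u, s * v) := by
  obtain ⟨k, rfl⟩ := hs
  exact zpow_mul_right u v k

theorem mul_mem_zpowers_right {u s : G} (hs : s ∈ Subgroup.zpowers u) (v : G) :
    NielsenEquiv (u, v) (u, v * s) := by
  simpa using (inv_right u v).trans
    ((mul_right_of_mem_zpowers (Subgroup.inv_mem _ hs) v⁻¹).trans (inv_right _ _))

theorem conj {u v : G} (h : Subgroup.closure {u, v} = ⊤) (q : G) :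
    NielsenEquiv (u, v) (q⁻¹ * u * q, q⁻¹ * v * q) := by
  obtain ⟨w, rfl⟩ := (eta_surjective_iff (u, v)).2 h q
  exact ⟨MulAut.conj w⁻¹, freeGroup_fin_two_hom_ext (by simp) (by simp)⟩

theorem exists_one_right [IsCyclic G] (p : G × G) : ∃ x, NielsenEquiv p (x, 1) := by
  obtain ⟨g, hg⟩ := IsCyclic.exists_zpow_surjective (G := G)
  obtain ⟨⟨i, hi⟩, ⟨j, hj⟩⟩ := And.intro (hg p.1) (hg p.2)
  obtain rfl : p = (g ^ i, g ^ j) := Prod.ext hi.symm hj.symm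
  clear hi hj
  induction i, j using EuclideanDomain.GCD.induction with
  | H0 j => exact ⟨g ^ j, by simpa using swap 1 (g ^ j)⟩
  | H1 i j _ ih =>
    obtain ⟨x, hx⟩ := ih
    have euclid_step : NielsenEquiv (g ^ i, g ^ j) (g ^ i, g ^ (j % i)) := by
      have h := zpow_mul_right (g ^ i) (g ^ j) (-(j / i))
      rwa [← zpow_mul, ← zpow_add, show i * -(j / i) + j = j % i by
        rw [Int.emod_def]; ring] at h
    exact ⟨x, euclid_step.trans ((swap _ _).trans hx)⟩

end NielsenEquiv

section NormalForms

variable {G : Type*} [Group G]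

theorem exists_isChain_prod_eq_of_mem_closure {S : Set G} (hS : ∀ x ∈ S, x⁻¹ ∈ S) {g : G}
    (hg : g ∈ Subgroup.closure S) :
    ∃ l : List G, (∀ x ∈ l, x ∈ S) ∧ l.IsChain (fun x y ↦ x⁻¹ ≠ y) ∧ l.prod = g := by
  have key (x : G) (hx : x ∈ S) (l : List G) (hl : ∀ y ∈ l, y ∈ S)
      (hc : l.IsChain (fun x y ↦ x⁻¹ ≠ y)) : ∃ l' : List G, (∀ y ∈ l', y ∈ S) ∧
        l'.IsChain (fun x y ↦ x⁻¹ ≠ y) ∧ l'.prod = x * l.prod := by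
    rcases l with _ | ⟨y, l⟩
    · exact ⟨[x], by simpa using hx, .singleton x, by simp⟩
    · by_cases hxy : x⁻¹ = y
      · exact ⟨l, (List.forall_mem_cons.1 hl).2, hc.tail, by simp [← hxy]⟩
      · exact ⟨x :: y :: l, List.forall_mem_cons.2 ⟨hx, hl⟩, .cons_cons hxy hc, by simp⟩
  induction hg using Subgroup.closure_induction_left with
  | one => exact ⟨[], by simp⟩
  | mul_left x hx y _ ih =>
    obtain ⟨l, hl, hc, rfl⟩ := ih
    exact key x hx l hl hc
  | inv_mul_cancel x hx y _ ih =>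
    obtain ⟨l, hl, hc, rfl⟩ := ih
    exact key x⁻¹ (hS x hx) l hl hc

end NormalForms

section LyndonLength

variable {G : Type*} [Group G] {L : G → ℕ}

/-- Twice the Gromov product `(g | h)` of a length function `L`. For a word length it measures the
common initial part of `g` and `h`. -/
def gromov (L : G → ℕ) (g h : G) : ℤ := L g + L h - L (g⁻¹ * h)

/-- Integer-valued Lyndon length functions: those for which the Gromov product satisfies the
`0`-hyperbolic (tree) inequality. -/
structure IsLyndonLength (L : G → ℕ) : Prop where
  map_one : L 1 = 0
  map_inv (g : G) : L g⁻¹ = L g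
  min_gromov_le (g h k : G) : min (gromov L g h) (gromov L h k) ≤ gromov L g k

/-- Hyperbolicity of `g` for the length function `L`: in the tree of a Lyndon length function, `g`
translates along an axis instead of fixing a point (or the midpoint of an edge). -/
def IsHyperbolic (L : G → ℕ) (g : G) : Prop := L g < L (g * g)

namespace IsLyndonLength

theorem map_eq_of_eq_or_eq_inv (hL : IsLyndonLength L) {g h : G} (hg : g = h ∨ g = h⁻¹) :
    L g = L h := by
  rcases hg with rfl | rfl
  exacts [rfl, hL.map_inv h]

theorem gromov_comm (hL : IsLyndonLength L) (g h : G) : gromov L g h = gromov L h g := by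
  have := hL.map_inv (g⁻¹ * h)
  simp only [mul_inv_rev, inv_inv] at this
  simp only [gromov, this]
  ring

theorem gromov_one_right (hL : IsLyndonLength L) (g : G) : gromov L g 1 = 0 := by
  simp [gromov, hL.map_one, hL.map_inv]

theorem gromov_self (hL : IsLyndonLength L) (g : G) : gromov L g g = 2 * L g := by
  simp [gromov, hL.map_one, two_mul]

theorem gromov_nonneg (hL : IsLyndonLength L) (g h : G) : 0 ≤ gromov L g h := by
  simpa [hL.gromov_comm 1, hL.gromov_one_right] using hL.min_gromov_le g 1 h

theorem map_mul (hL : IsLyndonLength L) (g h : G) :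
    (L (g * h) : ℤ) = L g + L h - gromov L g⁻¹ h := by
  simp [gromov, hL.map_inv]

theorem gromov_mul_self (hL : IsLyndonLength L) (g h : G) :
    gromov L g (g * h) = 2 * L g - gromov L g⁻¹ h := by
  rw [gromov, inv_mul_cancel_left, hL.map_mul]
  ring

theorem gromov_mul_mul (hL : IsLyndonLength L) (s g h : G) :
    gromov L (s * g) (s * h) = gromov L g h + 2 * L s - gromov L s⁻¹ g - gromov L s⁻¹ h := by
  have cancel : (s * g)⁻¹ * (s * h) = g⁻¹ * h := by group
  have hgh : gromov L g h = L g + L h - L (g⁻¹ * h) := rfl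
  rw [gromov, cancel, hL.map_mul s g, hL.map_mul s h, hgh]
  ring

theorem gromov_le_left (hL : IsLyndonLength L) (g h : G) : gromov L g h ≤ 2 * L g := by
  have h₁ := hL.gromov_mul_self g (g⁻¹ * h)
  rw [mul_inv_cancel_left] at h₁
  linarith [hL.gromov_nonneg g⁻¹ (g⁻¹ * h)]

theorem le_gromov (hL : IsLyndonLength L) {g h k : G} {c : ℤ} (h₁ : c ≤ gromov L g h)
    (h₂ : c ≤ gromov L h k) : c ≤ gromov L g k :=
  (le_min h₁ h₂).trans (hL.min_gromov_le g h k)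

theorem gromov_eq_of_lt (hL : IsLyndonLength L) {g h k : G} (h₁ : gromov L g h < gromov L h k) :
    gromov L g k = gromov L g h := by
  refine le_antisymm (not_lt.1 fun h₂ ↦ ?_) (hL.le_gromov le_rfl h₁.le)
  rw [hL.gromov_comm h k] at h₁
  have := hL.min_gromov_le g k h
  grind

theorem map_conj_le (hL : IsLyndonLength L) {q y : G} {c : ℤ} (h₁ : c ≤ gromov L q y)
    (h₂ : c + gromov L q y⁻¹ ≤ 2 * L y) :
    L (q⁻¹ * y * q) + gromov L q y⁻¹ + c ≤ L y + 2 * L q := by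
  rw [hL.gromov_comm q y⁻¹] at h₂ ⊢
  have h₃ : c ≤ gromov L q (y * q) :=
    hL.le_gromov h₁ (by rw [hL.gromov_mul_self]; linarith)
  have h₄ := hL.map_mul q⁻¹ (y * q)
  rw [inv_inv, hL.map_inv, hL.map_mul y q, ← mul_assoc] at h₄
  linarith

theorem map_conj_inv_mul_add_le (hL : IsLyndonLength L) {q y t : G} (hle : L y ≤ L t)
    (hty : gromov L t y = L y) (hyt : L y ≤ gromov L y⁻¹ t⁻¹) (hqy : gromov L q y⁻¹ = 2 * L q)
    (hq : 2 * L q ≤ L y) : L (q⁻¹ * (y⁻¹ * t) * q) + 2 * L q ≤ L t := by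
  set s := y⁻¹ * t with hs
  have hls : (L s : ℤ) = L t := by
    rw [hs, hL.map_mul, inv_inv, hL.gromov_comm, hL.map_inv]
    lia
  have hqs : 2 * L q ≤ gromov L q s := hL.le_gromov hqy.ge <| by
    rw [hs, hL.gromov_mul_self, inv_inv, hL.gromov_comm, hL.map_inv]
    lia
  have hqs' : gromov L q s⁻¹ = 2 * L q := by
    refine le_antisymm (hL.gromov_le_left _ _) (hL.le_gromov (h := t⁻¹) ?_ ?_)
    · exact hL.le_gromov hqy.ge (by lia)
    · rw [hs, mul_inv_rev, inv_inv, hL.gromov_mul_self, inv_inv, hL.map_inv]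
      lia
  have := hL.map_conj_le hqs (by lia)
  lia

theorem isHyperbolic_iff (hL : IsLyndonLength L) {g : G} :
    IsHyperbolic L g ↔ gromov L g⁻¹ g < L g := by
  rw [IsHyperbolic, ← Nat.cast_lt (α := ℤ), hL.map_mul]
  constructor <;> intro <;> linarith

theorem isHyperbolic_inv (hL : IsLyndonLength L) {g : G} (hg : IsHyperbolic L g) :
    IsHyperbolic L g⁻¹ := by
  rwa [IsHyperbolic, ← mul_inv_rev, hL.map_inv, hL.map_inv]

end IsLyndonLength

/-- A relation `T` governing consecutive letters of a word such that the cancellations on the two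
sides of a letter never meet. -/
structure IsLocallyReduced (L : G → ℕ) (T : G → G → Prop) : Prop where
  gromov_lt {x y : G} : T x y → gromov L x⁻¹ y < 2 * L y
  gromov_add_lt {x y z : G} : T x y → T y z → gromov L x⁻¹ y + gromov L y⁻¹ z < 2 * L y

namespace IsLocallyReduced

variable {T : G → G → Prop}

theorem gromov_inv_lt_gromov_prod (hT : IsLocallyReduced L T) (hL : IsLyndonLength L)
    {l : List G} : ∀ {x y : G}, (x :: y :: l).IsChain T →
      gromov L x⁻¹ y < gromov L y (y :: l).prod := by
  induction l with
  | nil =>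
    intro x y hc
    simpa [hL.gromov_self] using hT.gromov_lt (List.isChain_pair.1 hc)
  | cons z l ih =>
    intro x y hc
    obtain ⟨hxy, hc⟩ := List.isChain_cons_cons.1 hc
    rw [List.prod_cons, hL.gromov_mul_self, hL.gromov_eq_of_lt (ih hc)]
    linarith [hT.gromov_add_lt hxy hc.rel]

theorem gromov_inv_prod (hT : IsLocallyReduced L T) (hL : IsLyndonLength L) {x y : G} {l : List G}
    (hc : (x :: y :: l).IsChain T) : gromov L x⁻¹ (y :: l).prod = gromov L x⁻¹ y :=
  hL.gromov_eq_of_lt (hT.gromov_inv_lt_gromov_prod hL hc)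

theorem le_map_prod (hT : IsLocallyReduced L T) (hL : IsLyndonLength L) {N : ℕ}
    (hle : ∀ x y, T x y → gromov L x⁻¹ y ≤ L x) {l : List G} (hne : l ≠ []) (hc : l.IsChain T)
    (hN : ∀ x ∈ l, N ≤ L x) : N ≤ L l.prod := by
  induction l with
  | nil => exact absurd rfl hne
  | cons x l ih =>
    rcases l with _ | ⟨y, l⟩
    · simpa using hN x
    · have hxy := hle x y hc.rel
      have hx := hL.map_mul x (y :: l).prod
      rw [hT.gromov_inv_prod hL hc] at hx
      have hl := ih (by simp) hc.tail fun z hz ↦ hN z (List.mem_cons_of_mem _ hz)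
      rw [List.prod_cons]
      lia

theorem map_head_lt_gromov_prod (hT : IsLocallyReduced L T) (hL : IsLyndonLength L)
    (hlt : ∀ x y, T x y → gromov L x⁻¹ y < L x) {x : G} {l : List G} (hx : 0 < L x)
    (hc : (x :: l).IsChain T) : L x < gromov L x (x :: l).prod := by
  rcases l with _ | ⟨y, l⟩
  · rw [List.prod_singleton, hL.gromov_self]
    lia
  · rw [List.prod_cons, hL.gromov_mul_self, hT.gromov_inv_prod hL hc]
    linarith [hlt x y hc.rel]

end IsLocallyReduced

end LyndonLength

section SyllableLength

open Monoid Monoid.CoprodI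

variable {ι : Type*} {M : ι → Type*}

open Classical in
/-- Twice the number of common leading syllables of two words, plus one if the syllables that
follow are distinct elements of the same factor. -/
noncomputable def overlap : List (Σ i, M i) → List (Σ i, M i) → ℕ
  | x :: l, y :: l' => if x = y then 2 + overlap l l' else if x.1 = y.1 then 1 else 0
  | _, _ => 0

theorem min_overlap_le (l₁ l₂ l₃ : List (Σ i, M i)) :
    min (overlap l₁ l₂) (overlap l₂ l₃) ≤ overlap l₁ l₃ := by
  induction l₁ generalizing l₂ l₃ with
  | nil => simp [overlap]
  | cons x l₁ ih =>
    rcases l₂ with _ | ⟨y, l₂⟩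
    · simp [overlap]
    rcases l₃ with _ | ⟨z, l₃⟩
    · simp [overlap]
    specialize ih l₂ l₃
    grind [overlap]

theorem overlap_take_self (l : List (Σ i, M i)) {k : ℕ} (hk : k ≤ l.length) :
    overlap (l.take k) l = 2 * k := by
  induction l generalizing k with
  | nil => simp_all [overlap]
  | cons x l ih =>
    rcases k with _ | k
    · simp [overlap]
    · simp [overlap, ih (Nat.le_of_succ_le_succ hk), mul_add, add_comm]

variable [∀ i, Group (M i)]

open Classical in
/-- The number of syllables of the reduced word representing an element of a free product. -/
noncomputable def syllableLength (g : CoprodI M) : ℕ := (Word.equiv g).toList.length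

local notation "ℓ" => syllableLength

/-- The copy of `M i` inside the free product. -/
abbrev factor (M : ι → Type*) [∀ i, Group (M i)] (i : ι) : Subgroup (CoprodI M) :=
  (of : M i →* CoprodI M).range

theorem syllableLength_word_prod (w : Word M) : ℓ w.prod = w.toList.length := by
  classical
  exact congrArg (fun w ↦ w.toList.length) (Word.equiv.apply_symm_apply w)

theorem exists_word_prod_eq (g : CoprodI M) : ∃ w : Word M, w.prod = g := by
  classical
  exact ⟨Word.equiv g, Word.equiv.symm_apply_apply g⟩

theorem syllableLength_inv_mul_of_fstIdx_ne (w w' : Word M)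
    (h : ∀ i, w.fstIdx = some i → w'.fstIdx ≠ some i) :
    ℓ (w.prod⁻¹ * w'.prod) = w.toList.length + w'.toList.length := by
  induction w using Word.consRecOn generalizing w' with
  | empty => simp [syllableLength_word_prod]
  | cons i m w hmw hm ih =>
    have hw' : w'.fstIdx ≠ some i := h i (Word.fstIdx_cons ..)
    have := ih (Word.cons m⁻¹ w' hw' (inv_ne_one.2 hm)) (by
      rintro j hj
      rw [Word.fstIdx_cons]
      rintro ⟨⟩
      exact hmw hj)
    simp only [Word.prod_cons, Word.cons_toList, List.length_cons, mul_inv_rev, map_inv,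
      mul_assoc] at this ⊢
    lia

theorem syllableLength_inv_mul_of_head_ne {i : ι} {m m' : M i} (hm : m ≠ m') (w w' : Word M)
    (hw : w.fstIdx ≠ some i) (hw' : w'.fstIdx ≠ some i) :
    ℓ ((of m * w.prod)⁻¹ * (of m' * w'.prod)) = w.toList.length + w'.toList.length + 1 := by
  have merge : (of m * w.prod)⁻¹ * (of m' * w'.prod) =
      w.prod⁻¹ * (Word.cons (m⁻¹ * m') w' hw' (by rwa [Ne, inv_mul_eq_one])).prod := by
    simp [mul_assoc]
  rw [merge, syllableLength_inv_mul_of_fstIdx_ne]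
  · simp [add_assoc]
  · rintro j hj
    rw [Word.fstIdx_cons]
    rintro ⟨⟩
    exact hw hj

theorem syllableLength_inv_mul_add_overlap (w w' : Word M) :
    ℓ (w.prod⁻¹ * w'.prod) + overlap w.toList w'.toList = w.toList.length + w'.toList.length := by
  induction w using Word.consRecOn generalizing w' with
  | empty => simp [syllableLength_word_prod, overlap]
  | cons i m w hw hm ih =>
    induction w' using Word.consRecOn with
    | empty =>
      simpa [overlap, Word.fstIdx] using
        syllableLength_inv_mul_of_fstIdx_ne (.cons m w hw hm) .empty
    | cons j m' w' hw' hm' =>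
      by_cases hij : i = j
      · subst hij
        by_cases hmm : m = m'
        · subst hmm
          have cancel : (of m * w.prod)⁻¹ * (of m * w'.prod) = w.prod⁻¹ * w'.prod := by group
          simp only [Word.prod_cons, Word.cons_toList, cancel, overlap, if_true, List.length_cons]
          linarith [ih w']
        · have := syllableLength_inv_mul_of_head_ne hmm w w' hw hw'
          simp only [Word.prod_cons, Word.cons_toList, this, overlap, Sigma.mk.injEq, heq_eq_eq,
            hmm, and_false, if_false, if_true, List.length_cons]
          ring
      · simpa [overlap, hij] using syllableLength_inv_mul_of_fstIdx_ne (.cons m w hw hm)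
          (.cons m' w' hw' hm') (by simpa [eq_comm] using hij)

theorem gromov_syllableLength_word_prod (w w' : Word M) :
    gromov ℓ w.prod w'.prod = overlap w.toList w'.toList := by
  have := syllableLength_inv_mul_add_overlap w w'
  rw [gromov, syllableLength_word_prod, syllableLength_word_prod]
  lia

theorem isLyndonLength_syllableLength : IsLyndonLength (syllableLength (M := M)) where
  map_one := syllableLength_word_prod .empty
  map_inv g := by
    obtain ⟨w, rfl⟩ := exists_word_prod_eq g
    simpa [syllableLength_word_prod] using
      syllableLength_inv_mul_of_fstIdx_ne w .empty (by simp [Word.fstIdx])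
  min_gromov_le g h k := by
    obtain ⟨w₁, rfl⟩ := exists_word_prod_eq g
    obtain ⟨w₂, rfl⟩ := exists_word_prod_eq h
    obtain ⟨w₃, rfl⟩ := exists_word_prod_eq k
    simp only [gromov_syllableLength_word_prod]
    exact_mod_cast min_overlap_le w₁.toList w₂.toList w₃.toList

theorem exists_prefix {g : CoprodI M} {k : ℕ} (hk : k ≤ ℓ g) :
    ∃ q : CoprodI M, ℓ q = k ∧ gromov ℓ q g = 2 * k := by
  obtain ⟨w, rfl⟩ := exists_word_prod_eq g
  rw [syllableLength_word_prod] at hk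
  let q : Word M :=
    ⟨w.toList.take k, fun x hx ↦ w.ne_one x (List.mem_of_mem_take hx), w.chain_ne.take k⟩
  refine ⟨q.prod, ?_, ?_⟩
  · simpa [syllableLength_word_prod, q] using hk
  · rw [gromov_syllableLength_word_prod, overlap_take_self _ hk]
    simp

theorem exists_mem_factor_of_syllableLength_le_one [Nonempty ι] {g : CoprodI M} (hg : ℓ g ≤ 1) :
    ∃ i, g ∈ factor M i := by
  obtain ⟨w, rfl⟩ := exists_word_prod_eq g
  rw [syllableLength_word_prod] at hg
  induction w using Word.consRecOn with
  | empty => exact ⟨Classical.arbitrary ι, one_mem _⟩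
  | cons i m w hmw hm ih =>
    obtain rfl : w = .empty := Word.ext (by simpa using hg)
    exact ⟨i, m, by simp⟩

theorem exists_word_of_mem_factor {i : ι} {g : CoprodI M} (hg : g ∈ factor M i) (hg1 : g ≠ 1) :
    ∃ (w : Word M) (m : M i), w.prod = g ∧ w.toList = [⟨i, m⟩] := by
  obtain ⟨m, rfl⟩ := hg
  refine ⟨.cons m .empty (by simp [Word.fstIdx]) (by rintro rfl; simp at hg1), m, by simp⟩

theorem syllableLength_of_mem_factor {i : ι} {g : CoprodI M} (hg : g ∈ factor M i) (hg1 : g ≠ 1) :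
    ℓ g = 1 := by
  obtain ⟨w, m, rfl, hw⟩ := exists_word_of_mem_factor hg hg1
  simp [syllableLength_word_prod, hw]

theorem gromov_eq_zero_of_mem_factor {i j : ι} (hij : i ≠ j) {g h : CoprodI M}
    (hg : g ∈ factor M i) (hh : h ∈ factor M j) : gromov ℓ g h = 0 := by
  have hL := isLyndonLength_syllableLength (M := M)
  by_cases hg1 : g = 1
  · rw [hg1, hL.gromov_comm, hL.gromov_one_right]
  by_cases hh1 : h = 1
  · rw [hh1, hL.gromov_one_right]
  obtain ⟨w, m, rfl, hw⟩ := exists_word_of_mem_factor hg hg1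
  obtain ⟨w', m', rfl, hw'⟩ := exists_word_of_mem_factor hh hh1
  simp [gromov_syllableLength_word_prod, hw, hw', overlap, hij]

theorem gromov_eq_one_of_mem_factor {i : ι} {g h : CoprodI M} (hg : g ∈ factor M i)
    (hh : h ∈ factor M i) (hg1 : g ≠ 1) (hh1 : h ≠ 1) (hgh : g ≠ h) : gromov ℓ g h = 1 := by
  rw [gromov, syllableLength_of_mem_factor hg hg1, syllableLength_of_mem_factor hh hh1,
    syllableLength_of_mem_factor (mul_mem (inv_mem hg) hh) (inv_mul_eq_one.not.2 hgh)]
  norm_num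

theorem syllableLength_le_one_of_mem_factor {i : ι} {g : CoprodI M} (hg : g ∈ factor M i) :
    ℓ g ≤ 1 := by
  by_cases hg1 : g = 1
  · simp [hg1, isLyndonLength_syllableLength.map_one]
  · exact (syllableLength_of_mem_factor hg hg1).le

variable [Nonempty ι]

theorem two_le_syllableLength_of_isHyperbolic {g : CoprodI M} (hg : IsHyperbolic ℓ g) :
    2 ≤ ℓ g := by
  by_contra! hlt
  obtain ⟨i, hi⟩ := exists_mem_factor_of_syllableLength_le_one (Nat.le_of_lt_succ hlt)
  have hg1 : g ≠ 1 := by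
    rintro rfl
    simp [IsHyperbolic] at hg
  have h₁ := syllableLength_of_mem_factor hi hg1
  have h₂ := syllableLength_le_one_of_mem_factor (mul_mem hi hi)
  exact (hg.trans_le h₂).ne h₁

theorem exists_conj_mem_factor_of_not_isHyperbolic {g : CoprodI M} (hg : ¬IsHyperbolic ℓ g) :
    ∃ q i, q⁻¹ * g * q ∈ factor M i := by
  have hL := isLyndonLength_syllableLength (M := M)
  rw [hL.isHyperbolic_iff, not_lt, hL.gromov_comm] at hg
  obtain ⟨q, hq, hqg⟩ := exists_prefix (Nat.div_le_self (ℓ g) 2)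
  have hqg' : gromov ℓ q g⁻¹ = 2 * ℓ q :=
    le_antisymm (hL.gromov_le_left _ _) (hL.le_gromov (by rw [hqg, hq]) (by lia))
  have hconj := hL.map_conj_le (q := q) (y := g) (c := 2 * ℓ q) (by rw [hqg, hq]) (by lia)
  exact ⟨q, exists_mem_factor_of_syllableLength_le_one (by lia)⟩

end SyllableLength

section ReducedPair

open Monoid Monoid.CoprodI

variable {ι : Type*} {M : ι → Type*} [∀ i, Group (M i)]

local notation "ℓ" => syllableLength

/-- A generating pair of hyperbolic elements of a free product whose total length is minimal in its
Nielsen class. -/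
structure IsReducedPair (u v : CoprodI M) : Prop where
  closure_eq_top : Subgroup.closure {u, v} = ⊤
  le {u' v' : CoprodI M} : NielsenEquiv (u, v) (u', v') → ℓ u + ℓ v ≤ ℓ u' + ℓ v'
  left : IsHyperbolic ℓ u
  right : IsHyperbolic ℓ v

/-- The letters of the words in a pair of generators. -/
def pairLetters {G : Type*} [Group G] (u v : G) : Set G := {u, u⁻¹, v, v⁻¹}

theorem inv_mem_pairLetters {G : Type*} [Group G] {u v x : G} (hx : x ∈ pairLetters u v) :
    x⁻¹ ∈ pairLetters u v := by
  rcases hx with rfl | rfl | rfl | rfl <;> simp [pairLetters]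

namespace IsReducedPair

variable {u v y t a b : CoprodI M}

theorem swap (h : IsReducedPair u v) : IsReducedPair v u where
  closure_eq_top := (NielsenEquiv.swap u v).closure_eq_top h.closure_eq_top
  le h' := by linarith [h.le ((NielsenEquiv.swap u v).trans h')]
  left := h.right
  right := h.left

theorem inv_left (h : IsReducedPair u v) : IsReducedPair u⁻¹ v where
  closure_eq_top := (NielsenEquiv.inv_left u v).closure_eq_top h.closure_eq_top
  le h' := by
    rw [isLyndonLength_syllableLength.map_inv]
    exact h.le ((NielsenEquiv.inv_left u v).trans h')
  left := isLyndonLength_syllableLength.isHyperbolic_inv h.left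
  right := h.right

theorem inv_right (h : IsReducedPair u v) : IsReducedPair u v⁻¹ := h.swap.inv_left.swap

theorem exists_partner (h : IsReducedPair u v) (hy : y ∈ pairLetters u v) :
    ∃ t, IsReducedPair y t ∧ pairLetters u v ⊆ pairLetters y t := by
  rcases hy with rfl | rfl | rfl | rfl
  · exact ⟨v, h, subset_rfl⟩
  · exact ⟨v, h.inv_left, by simp only [pairLetters, inv_inv]; grind⟩
  · exact ⟨u, h.swap, by simp only [pairLetters]; grind⟩
  · exact ⟨u, h.swap.inv_left, by simp only [pairLetters, inv_inv]; grind⟩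

theorem gromov_le (h : IsReducedPair y t) : gromov ℓ t y ≤ ℓ y := by
  have hle := h.le (NielsenEquiv.mul_right_of_mem_zpowers
    (inv_mem (Subgroup.mem_zpowers y)) t)
  rw [isLyndonLength_syllableLength.gromov_comm, gromov]
  lia

theorem gromov_letter_le (h : IsReducedPair y t) (ha : a ∈ pairLetters y t) (hay : a ≠ y) :
    gromov ℓ a y ≤ ℓ y ∧ (a = t ∨ a = t⁻¹ ∨ gromov ℓ a y < ℓ y) := by
  rcases ha with rfl | rfl | rfl | rfl
  · exact absurd rfl hay
  · have := isLyndonLength_syllableLength.isHyperbolic_iff.1 h.left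
    exact ⟨this.le, .inr (.inr this)⟩
  · exact ⟨h.gromov_le, .inl rfl⟩
  · exact ⟨h.inv_right.gromov_le, .inr (.inl rfl)⟩

theorem gromov_le_of_ne (h : IsReducedPair u v) (ha : a ∈ pairLetters u v)
    (hb : b ∈ pairLetters u v) (hab : a ≠ b) : gromov ℓ a b ≤ ℓ b := by
  obtain ⟨t, hbt, hsub⟩ := h.exists_partner hb
  exact (hbt.gromov_letter_le (hsub ha) hab).1

variable [Nonempty ι]

-- If `y` cancelled completely on both sides against `t` and `t⁻¹`, conjugating `(y, y⁻¹ * t)` by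
-- half of `y⁻¹` would shorten the pair.
theorem not_aligned (h : IsReducedPair y t) :
    ¬(ℓ y ≤ gromov ℓ t y ∧ ℓ y ≤ gromov ℓ y⁻¹ t⁻¹) := by
  rintro ⟨hty, hyt⟩
  have hL := isLyndonLength_syllableLength (M := M)
  have hy := two_le_syllableLength_of_isHyperbolic h.left
  have hty_eq : gromov ℓ t y = ℓ y := le_antisymm h.gromov_le hty
  have hle : ℓ y ≤ ℓ t := by
    have := h.swap.gromov_le
    rw [hL.gromov_comm] at this
    lia
  obtain ⟨q, hq, hqy⟩ := exists_prefix (g := y⁻¹) (k := ℓ y / 2)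
    (by rw [hL.map_inv]; exact Nat.div_le_self _ _)
  rw [← hq] at hqy
  have hconj_t := hL.map_conj_inv_mul_add_le hle hty_eq hyt hqy (by lia)
  have hconj_y := hL.map_conj_le (hL.gromov_nonneg q y) (by lia)
  have hN : NielsenEquiv (y, t) (y, y⁻¹ * t) :=
    .mul_right_of_mem_zpowers (inv_mem (Subgroup.mem_zpowers y)) t
  have := h.le (hN.trans (.conj (hN.closure_eq_top h.closure_eq_top) q))
  lia

theorem gromov_add_lt (h : IsReducedPair y t) (ha : a ∈ pairLetters y t)
    (hb : b ∈ pairLetters y t) (hay : a ≠ y) (hby : b ≠ y⁻¹) :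
    gromov ℓ a y + gromov ℓ y⁻¹ b < 2 * ℓ y := by
  have hL := isLyndonLength_syllableLength (M := M)
  obtain ⟨ha_le, ha_eq⟩ := h.gromov_letter_le ha hay
  obtain ⟨hb_le, hb_eq⟩ := h.inv_left.gromov_letter_le
    (by simpa only [pairLetters, inv_inv, Set.insert_comm] using hb) hby
  rw [hL.gromov_comm b, hL.map_inv] at hb_le hb_eq
  by_contra! hge
  have hay_ge : ℓ y ≤ gromov ℓ a y := by linarith
  have hyb_ge : ℓ y ≤ gromov ℓ y⁻¹ b := by linarith
  have hab : a ≠ b := by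
    rintro rfl
    exact (hL.isHyperbolic_iff.1 h.left).not_ge (hL.le_gromov hyb_ge hay_ge)
  obtain rfl | rfl : a = t ∨ a = t⁻¹ := by grind
  · obtain rfl : b = a⁻¹ := by grind
    exact h.not_aligned ⟨hay_ge, hyb_ge⟩
  · obtain rfl : b = t := by grind
    exact h.inv_right.not_aligned ⟨hay_ge, by rwa [inv_inv]⟩

theorem isLocallyReduced (h : IsReducedPair u v) : IsLocallyReduced ℓ
    fun x y ↦ x ∈ pairLetters u v ∧ y ∈ pairLetters u v ∧ x⁻¹ ≠ y where
  gromov_lt := by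
    rintro x y ⟨hx, hy, hxy⟩
    have hle := h.gromov_le_of_ne (inv_mem_pairLetters hx) hy hxy
    obtain ⟨t, hyt, -⟩ := h.exists_partner hy
    have := two_le_syllableLength_of_isHyperbolic hyt.left
    lia
  gromov_add_lt := by
    rintro x y z ⟨hx, hy, hxy⟩ ⟨-, hz, hyz⟩
    obtain ⟨t, hyt, hsub⟩ := h.exists_partner hy
    exact hyt.gromov_add_lt (hsub (inv_mem_pairLetters hx)) (hsub hz) hxy hyz.symm

end IsReducedPair

variable [Nonempty ι]

-- The reduced words in such a pair would have length at least two, so would miss the factors.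
theorem not_isReducedPair (u v : CoprodI M) : ¬IsReducedPair u v := by
  intro h
  have hL := isLyndonLength_syllableLength (M := M)
  have hu := two_le_syllableLength_of_isHyperbolic h.left
  obtain ⟨g, hg, -⟩ := exists_prefix (g := u) (k := 1) (by lia)
  have hg_mem : g ∈ Subgroup.closure (pairLetters u v) :=
    Subgroup.closure_mono (by simp only [pairLetters]; grind)
      (h.closure_eq_top.ge (Subgroup.mem_top g))
  obtain ⟨l, hl, hc, rfl⟩ :=
    exists_isChain_prod_eq_of_mem_closure (fun _ ↦ inv_mem_pairLetters) hg_mem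
  have hne : l ≠ [] := by
    rintro rfl
    simp [hL.map_one] at hg
  have hge : 2 ≤ ℓ l.prod := by
    refine h.isLocallyReduced.le_map_prod hL ?_ hne
      ((List.IsChain.iff_mem.1 hc).imp fun x y ⟨hx, hy, hxy⟩ ↦ ⟨hl x hx, hl y hy, hxy⟩) ?_
    · rintro x y ⟨hx, hy, hxy⟩
      rw [hL.gromov_comm, ← hL.map_inv x]
      exact h.gromov_le_of_ne hy (inv_mem_pairLetters hx) hxy.symm
    · intro x hx
      obtain ⟨t, hxt, -⟩ := h.exists_partner (hl x hx)
      exact two_le_syllableLength_of_isHyperbolic hxt.left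
  lia

theorem exists_nielsenEquiv_mem_factor {p : CoprodI M × CoprodI M}
    (hp : Subgroup.closure {p.1, p.2} = ⊤) :
    ∃ i u v, NielsenEquiv p (u, v) ∧ u ∈ factor M i := by
  obtain ⟨⟨u, v⟩, hpq, hmin⟩ := exists_minimalFor_of_wellFoundedLT (NielsenEquiv p)
    (fun q ↦ ℓ q.1 + ℓ q.2) ⟨p, .refl p⟩
  have hle {u' v' : CoprodI M} (h : NielsenEquiv (u, v) (u', v')) :
      ℓ u + ℓ v ≤ ℓ u' + ℓ v' := by
    by_contra! hlt
    exact hlt.not_ge (hmin (hpq.trans h) hlt.le)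
  have hgen := hpq.closure_eq_top hp
  by_cases hu : IsHyperbolic ℓ u
  · have hv : ¬IsHyperbolic ℓ v := fun hv ↦ not_isReducedPair u v ⟨hgen, hle, hu, hv⟩
    obtain ⟨q, i, hi⟩ := exists_conj_mem_factor_of_not_isHyperbolic hv
    exact ⟨i, _, _, hpq.trans ((NielsenEquiv.conj hgen q).trans (.swap _ _)), hi⟩
  · obtain ⟨q, i, hi⟩ := exists_conj_mem_factor_of_not_isHyperbolic hu
    exact ⟨i, _, _, hpq.trans (.conj hgen q), hi⟩

end ReducedPair

section BlockForm

variable {G : Type*} [Group G]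

/-- With respect to a pair of generators `(u, v)`, the element `x` is a block `e * s`, where
`e` is `v` or `v⁻¹` and `s` is a power of `u`. -/
def IsBlock (u v e s x : G) : Prop :=
  (e = v ∨ e = v⁻¹) ∧ s ∈ Subgroup.zpowers u ∧ x = e * s

/-- The blocks `x` and `y` may follow each other in a word in `u` and `v` without free
cancellation: they are `e * s` and `d * r` with `s ≠ 1` unless `e = d`. -/
def BlockAdj (u v x y : G) : Prop :=
  ∃ e s d r, IsBlock u v e s x ∧ IsBlock u v d r y ∧ (s ≠ 1 ∨ e = d)

/-- The words in `u` and `v` in block form, that is, a power of `u` followed by a sequence of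
blocks without free cancellation. -/
def HasBlockForm (u v g : G) : Prop :=
  ∃ s ∈ Subgroup.zpowers u, ∃ l : List G, (∀ x ∈ l, ∃ e r, IsBlock u v e r x) ∧
    l.IsChain (BlockAdj u v) ∧ g = s * l.prod

theorem HasBlockForm.mul_left {u v e g : G} (he : e = v ∨ e = v⁻¹) (hg : HasBlockForm u v g) :
    HasBlockForm u v (e * g) := by
  obtain ⟨s, hs, l, hl, hc, rfl⟩ := hg
  have hx : IsBlock u v e s (e * s) := ⟨he, hs, rfl⟩
  rcases l with _ | ⟨y, l⟩
  · exact ⟨1, one_mem _, [e * s], by simpa using ⟨e, s, hx⟩, .singleton _, by simp⟩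
  obtain ⟨⟨d, r, hd, hr, rfl⟩, hl'⟩ := List.forall_mem_cons.1 hl
  by_cases hsd : s ≠ 1 ∨ e = d
  · exact ⟨1, one_mem _, e * s :: d * r :: l, List.forall_mem_cons.2 ⟨⟨e, s, hx⟩, hl⟩,
      .cons_cons ⟨e, s, d, r, hx, ⟨hd, hr, rfl⟩, hsd⟩ hc, by simp [mul_assoc]⟩
  · obtain ⟨rfl, hed⟩ := not_or.1 hsd |>.imp_left not_not.1
    obtain rfl : d = e⁻¹ := by
      rcases he with rfl | rfl <;> rcases hd with rfl | rfl <;> simp_all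
    exact ⟨r, hr, l, hl', hc.tail, by simp [mul_assoc]⟩

theorem hasBlockForm_of_mem_closure {u v g : G} (hg : g ∈ Subgroup.closure {u, v}) :
    HasBlockForm u v g := by
  have zpow_mul {r : G} (hr : r ∈ Subgroup.zpowers u) {g : G} :
      HasBlockForm u v g → HasBlockForm u v (r * g) := by
    rintro ⟨s, hs, l, hl, hc, rfl⟩
    exact ⟨r * s, mul_mem hr hs, l, hl, hc, by rw [mul_assoc]⟩
  induction hg using Subgroup.closure_induction_left with
  | one => exact ⟨1, one_mem _, [], by simp⟩
  | mul_left x hx y _ ih =>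
    rcases hx with rfl | rfl
    · exact zpow_mul (Subgroup.mem_zpowers x) ih
    · exact ih.mul_left (.inl rfl)
  | inv_mul_cancel x hx y _ ih =>
    rcases hx with rfl | rfl
    · exact zpow_mul (inv_mem (Subgroup.mem_zpowers x)) ih
    · exact ih.mul_left (.inr rfl)

end BlockForm

section FactorReducedPair

open Monoid Monoid.CoprodI

variable {ι : Type*} {M : ι → Type*} [∀ i, Group (M i)]

local notation "ℓ" => syllableLength

/-- A generating pair of a free product whose first element lies in the factor `M i` and whose
second element is hyperbolic, of minimal length among all Nielsen equivalent pairs starting in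
`M i`. -/
structure IsFactorReducedPair (i : ι) (u v : CoprodI M) : Prop where
  closure_eq_top : Subgroup.closure {u, v} = ⊤
  mem_factor : u ∈ factor M i
  le {u' v' : CoprodI M} : NielsenEquiv (u, v) (u', v') → u' ∈ factor M i → ℓ v ≤ ℓ v'
  isHyperbolic : IsHyperbolic ℓ v

namespace IsFactorReducedPair

variable {i : ι} {u v s r d e x y : CoprodI M}

theorem inv (h : IsFactorReducedPair i u v) : IsFactorReducedPair i u v⁻¹ where
  closure_eq_top := (NielsenEquiv.inv_right u v).closure_eq_top h.closure_eq_top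
  mem_factor := h.mem_factor
  le h' hu' := by
    rw [isLyndonLength_syllableLength.map_inv]
    exact h.le ((NielsenEquiv.inv_right u v).trans h') hu'
  isHyperbolic := isLyndonLength_syllableLength.isHyperbolic_inv h.isHyperbolic

theorem of_eq_or_eq_inv (h : IsFactorReducedPair i u v) (he : e = v ∨ e = v⁻¹) :
    IsFactorReducedPair i u e := by
  rcases he with rfl | rfl
  exacts [h, h.inv]

theorem mem_factor_of_mem_zpowers (h : IsFactorReducedPair i u v) (hs : s ∈ Subgroup.zpowers u) :
    s ∈ factor M i :=
  Subgroup.zpowers_le.2 h.mem_factor hs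

theorem two_le (h : IsFactorReducedPair i u v) : 2 ≤ ℓ v :=
  haveI : Nonempty ι := ⟨i⟩
  two_le_syllableLength_of_isHyperbolic h.isHyperbolic

theorem gromov_le (h : IsFactorReducedPair i u v) (hs : s ∈ Subgroup.zpowers u) :
    gromov ℓ s v ≤ 1 := by
  have hv := h.le (NielsenEquiv.mul_right_of_mem_zpowers (inv_mem hs) v) h.mem_factor
  have hs := syllableLength_le_one_of_mem_factor (h.mem_factor_of_mem_zpowers hs)
  rw [gromov]
  lia

theorem exists_first_syllable (h : IsFactorReducedPair i u v) :
    ∃ j, ∃ r ∈ factor M j, r ≠ 1 ∧ gromov ℓ r v = 2 := by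
  have : Nonempty ι := ⟨i⟩
  obtain ⟨r, hr, hrv⟩ := exists_prefix (g := v) (k := 1) (by linarith [h.two_le])
  obtain ⟨j, hj⟩ := exists_mem_factor_of_syllableLength_le_one hr.le
  refine ⟨j, r, hj, ?_, hrv⟩
  rintro rfl
  simp [isLyndonLength_syllableLength.map_one] at hr

-- Otherwise conjugation by `s` would preserve the factor `M i` and shorten `v`.
theorem gromov_inv_le (h : IsFactorReducedPair i u v) (hs : s ∈ factor M i)
    (hsv : 1 ≤ gromov ℓ s v) : gromov ℓ s v⁻¹ ≤ 1 := by
  have hL := isLyndonLength_syllableLength (M := M)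
  by_contra! hlt
  have hs_le := syllableLength_le_one_of_mem_factor hs
  have hle := h.le (NielsenEquiv.conj h.closure_eq_top s)
    (mul_mem (mul_mem (inv_mem hs) h.mem_factor) hs)
  have := hL.map_conj_le hsv (by linarith [hL.gromov_le_left s v⁻¹, h.two_le])
  lia

-- The element `t` is the first syllable of `s * v`.
theorem exists_gromov_le (h : IsFactorReducedPair i u v) (hs : s ∈ Subgroup.zpowers u)
    (hs1 : s ≠ 1) :
    ∃ t, 2 ≤ gromov ℓ t (s * v) ∧ gromov ℓ t v ≤ 1 ∧ gromov ℓ t v⁻¹ ≤ 1 := by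
  have hL := isLyndonLength_syllableLength (M := M)
  have hsi := h.mem_factor_of_mem_zpowers hs
  have hs_len := syllableLength_of_mem_factor hsi hs1
  obtain ⟨j, r, hrj, hr1, hrv⟩ := h.exists_first_syllable
  by_cases hij : i = j
  · subst hij
    have hsr : s⁻¹ ≠ r := by
      rintro rfl
      linarith [h.gromov_le (inv_mem hs)]
    have ht := mul_mem hsi hrj
    have ht1 : s * r ≠ 1 := fun h1 ↦ hsr (inv_eq_of_mul_eq_one_right h1)
    have htr : gromov ℓ (s * r) r = 1 :=
      gromov_eq_one_of_mem_factor ht hrj ht1 hr1 (by simpa using hs1)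
    have htv : gromov ℓ (s * r) v = 1 := by
      rw [hL.gromov_eq_of_lt (by rw [htr, hrv]; norm_num), htr]
    have hsr_gromov := gromov_eq_one_of_mem_factor (inv_mem hsi) hrj (inv_ne_one.2 hs1) hr1 hsr
    refine ⟨s * r, ?_, htv.le, h.gromov_inv_le ht htv.ge⟩
    linarith [hL.gromov_mul_mul s r v, h.gromov_le (inv_mem hs)]
  · have hsr := gromov_eq_zero_of_mem_factor hij (inv_mem hsi) hrj
    have hsv : gromov ℓ s⁻¹ v = 0 := by
      rw [hL.gromov_eq_of_lt (by rw [hsr, hrv]; norm_num), hsr]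
    exact ⟨s, by rw [hL.gromov_mul_self, hsv]; lia, h.gromov_le hs, h.inv.gromov_le hs⟩

theorem gromov_mul_le (h : IsFactorReducedPair i u v) (hs : s ∈ Subgroup.zpowers u) (hs1 : s ≠ 1)
    (he : e = v ∨ e = v⁻¹) : gromov ℓ (s * v) e ≤ 1 := by
  have hL := isLyndonLength_syllableLength (M := M)
  obtain ⟨t, ht, htv, htv'⟩ := h.exists_gromov_le hs hs1
  by_contra! hlt
  have hte : 2 ≤ gromov ℓ t e := hL.le_gromov ht hlt
  rcases he with rfl | rfl <;> linarith

theorem le_of_isBlock (h : IsFactorReducedPair i u v) (hx : IsBlock u v e s x) : ℓ v ≤ ℓ x := by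
  obtain ⟨he, hs, rfl⟩ := hx
  have hle := (h.of_eq_or_eq_inv he).le (.mul_mem_zpowers_right hs e) h.mem_factor
  rwa [isLyndonLength_syllableLength.map_eq_of_eq_or_eq_inv he] at hle

theorem le_gromov_of_isBlock (h : IsFactorReducedPair i u v) (hx : IsBlock u v e s x) :
    2 * ℓ v - 1 ≤ gromov ℓ x e := by
  have hL := isLyndonLength_syllableLength (M := M)
  obtain ⟨he, hs, rfl⟩ := hx
  have hse := (h.of_eq_or_eq_inv he).inv.gromov_le hs
  rw [hL.gromov_comm, hL.gromov_mul_self, hL.gromov_comm, hL.map_eq_of_eq_or_eq_inv he]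
  linarith

theorem gromov_lt_of_blockAdj (h : IsFactorReducedPair i u v) (hxy : BlockAdj u v x y) :
    gromov ℓ x⁻¹ y < ℓ v := by
  have hL := isLyndonLength_syllableLength (M := M)
  obtain ⟨e, s, d, r, ⟨he, hs, rfl⟩, hy, hsd⟩ := hxy
  have hv := h.two_le
  have hyd := h.le_gromov_of_isBlock hy
  have hxd : gromov ℓ (e * s)⁻¹ d < ℓ v := by
    have h_e := h.of_eq_or_eq_inv he
    by_cases hs1 : s = 1
    · obtain rfl : e = d := hsd.neg_resolve_left hs1
      rw [hs1, mul_one, ← hL.map_eq_of_eq_or_eq_inv he]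
      exact hL.isHyperbolic_iff.1 h_e.isHyperbolic
    · have hd : d = e⁻¹ ∨ d = e⁻¹⁻¹ := by
        rcases he with rfl | rfl <;> rcases hy.1 with rfl | rfl <;> simp
      rw [mul_inv_rev]
      linarith [h_e.inv.gromov_mul_le (inv_mem hs) (inv_ne_one.2 hs1) hd]
  by_contra! hlt
  exact hxd.not_ge (hL.le_gromov hlt (by linarith))

theorem le_of_blockAdj (h : IsFactorReducedPair i u v) (hxy : BlockAdj u v x y) :
    ℓ v ≤ ℓ x ∧ ℓ v ≤ ℓ y := by
  obtain ⟨e, s, d, r, hx, hy, -⟩ := hxy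
  exact ⟨h.le_of_isBlock hx, h.le_of_isBlock hy⟩

theorem isLocallyReduced (h : IsFactorReducedPair i u v) : IsLocallyReduced ℓ (BlockAdj u v) where
  gromov_lt hxy := by
    linarith [h.gromov_lt_of_blockAdj hxy, h.le_of_blockAdj hxy]
  gromov_add_lt hxy hyz := by
    linarith [h.gromov_lt_of_blockAdj hxy, h.gromov_lt_of_blockAdj hyz, h.le_of_blockAdj hxy]

theorem lt_gromov_prod (h : IsFactorReducedPair i u v) {l : List (CoprodI M)}
    (hx : IsBlock u v e s x) (hc : (x :: l).IsChain (BlockAdj u v)) :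
    ℓ x < gromov ℓ x (x :: l).prod := by
  refine h.isLocallyReduced.map_head_lt_gromov_prod isLyndonLength_syllableLength
    (fun x y hxy ↦ ?_) (by linarith [h.two_le, h.le_of_isBlock hx]) hc
  linarith [h.gromov_lt_of_blockAdj hxy, h.le_of_blockAdj hxy]

end IsFactorReducedPair

-- A word in such a pair containing `v` is long or begins in the factor `M i`, so the words miss
-- the other factors.
theorem not_isFactorReducedPair {i j : ι} (hij : i ≠ j) {u v b : CoprodI M}
    (hb : b ∈ factor M j) (hb1 : b ≠ 1) : ¬IsFactorReducedPair i u v := by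
  intro h
  have hL := isLyndonLength_syllableLength (M := M)
  have hb_len := syllableLength_of_mem_factor hb hb1
  have hv := h.two_le
  have hb_mem : b ∈ Subgroup.closure {u, v} := h.closure_eq_top.ge trivial
  obtain ⟨s, hs, l, hl, hc, rfl⟩ := hasBlockForm_of_mem_closure hb_mem
  have hsi := h.mem_factor_of_mem_zpowers hs
  rcases l with _ | ⟨x, l⟩
  · have hss := gromov_eq_zero_of_mem_factor hij hsi hb
    rw [List.prod_nil, mul_one] at hss hb_len
    rw [hL.gromov_self] at hss
    lia
  obtain ⟨e, r, hx⟩ := hl x List.mem_cons_self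
  have hprod : 3 ≤ gromov ℓ (x :: l).prod e := by
    have hlt := h.lt_gromov_prod hx hc
    rw [hL.gromov_comm] at hlt
    exact hL.le_gromov (by linarith [h.le_of_isBlock hx])
      (by linarith [h.le_gromov_of_isBlock hx])
  by_cases hs1 : s = 1
  · rw [hs1, one_mul] at hb_len
    have := hL.gromov_le_left (x :: l).prod e
    lia
  · have hs_prod : gromov ℓ s⁻¹ (x :: l).prod = 2 := by
      have := hL.gromov_mul_self s (x :: l).prod
      rw [gromov_eq_zero_of_mem_factor hij hsi hb, syllableLength_of_mem_factor hsi hs1] at this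
      lia
    have hse : 2 ≤ gromov ℓ s⁻¹ e := hL.le_gromov hs_prod.ge (by linarith)
    linarith [(h.of_eq_or_eq_inv hx.1).gromov_le (inv_mem hs)]

end FactorReducedPair

section GeneratingPairs

open Monoid Monoid.CoprodI

variable {ι : Type*} {M : ι → Type*} [∀ i, Group (M i)]

local notation "ℓ" => syllableLength

theorem closure_pair_ne_top {i k : ι} (hik : i ≠ k) [Nontrivial (M k)] {u v q : CoprodI M}
    (hu : u ∈ factor M i) (hv : q⁻¹ * v * q ∈ factor M i) : Subgroup.closure {u, v} ≠ ⊤ := by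
  classical
  intro htop
  let proj : CoprodI M →* M k := lift (Pi.mulSingle k (MonoidHom.id (M k)))
  have factor_le : factor M i ≤ proj.ker := by
    rintro - ⟨a, rfl⟩
    simp [proj, MonoidHom.mem_ker, Pi.mulSingle_eq_of_ne hik]
  have closure_le : Subgroup.closure {u, v} ≤ proj.ker := by
    rw [Subgroup.closure_le, Set.pair_subset_iff]
    exact ⟨factor_le hu, by simpa [MonoidHom.mem_ker, mul_assoc, inv_mul_eq_one] using factor_le hv⟩
  obtain ⟨b, hb⟩ := exists_ne (1 : M k)
  have : proj (of b) = 1 := closure_le (htop.ge trivial)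
  simp [proj, hb] at this

variable [Nontrivial ι] [∀ i, Nontrivial (M i)]

theorem exists_nielsenEquiv_mem_factor_not_isHyperbolic {p : CoprodI M × CoprodI M}
    (hp : Subgroup.closure {p.1, p.2} = ⊤) :
    ∃ i u v, NielsenEquiv p (u, v) ∧ u ∈ factor M i ∧ ¬IsHyperbolic ℓ v := by
  obtain ⟨i, u₀, v₀, hN₀, hu₀⟩ := exists_nielsenEquiv_mem_factor hp
  obtain ⟨⟨u, v⟩, ⟨hN, hu⟩, hmin⟩ := exists_minimalFor_of_wellFoundedLT
    (fun q : CoprodI M × CoprodI M ↦ NielsenEquiv p q ∧ q.1 ∈ factor M i) (fun q ↦ ℓ q.2)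
    ⟨(u₀, v₀), hN₀, hu₀⟩
  obtain ⟨j, hij⟩ := exists_ne i
  obtain ⟨b, hb⟩ := exists_ne (1 : M j)
  refine ⟨i, u, v, hN, hu, fun hv ↦ not_isFactorReducedPair hij.symm ⟨b, rfl⟩
    ((map_ne_one_iff _ (of_injective j)).2 hb) ⟨hN.closure_eq_top hp, hu, fun h' hu' ↦ ?_, hv⟩⟩
  by_contra! hlt
  exact hlt.not_ge (hmin ⟨hN.trans h', hu'⟩ hlt.le)

theorem exists_nielsenEquiv_of_isConj_of {p : CoprodI M × CoprodI M}
    (hp : Subgroup.closure {p.1, p.2} = ⊤) :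
    ∃ i j, i ≠ j ∧ ∃ (a : M i) (b : M j) (v : CoprodI M),
      NielsenEquiv p (of a, v) ∧ IsConj (of b) v := by
  obtain ⟨i, -, v, hN, ⟨a, rfl⟩, hv⟩ := exists_nielsenEquiv_mem_factor_not_isHyperbolic hp
  obtain ⟨q, j, hj⟩ := exists_conj_mem_factor_of_not_isHyperbolic hv
  obtain ⟨k, hik⟩ := exists_ne i
  refine ⟨i, j, ?_, a, ?_⟩
  · rintro rfl
    exact closure_pair_ne_top hik.symm ⟨a, rfl⟩ hj (hN.closure_eq_top hp)
  · obtain ⟨b, hb⟩ := hj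
    exact ⟨b, v, hN, isConj_iff.2 ⟨q, by rw [hb]; group⟩⟩

end GeneratingPairs

section CyclicFactors

open Monoid Monoid.Coprod

/-- The binary free product as an indexed free product over `Bool`. -/
def coprodEquivCoprodI (M : Bool → Type*) [∀ b, Group (M b)] :
    Coprod (M true) (M false) ≃* CoprodI M :=
  MonoidHom.toMulEquiv (lift CoprodI.of CoprodI.of) (CoprodI.lift fun | true => inl | false => inr)
    (by ext <;> simp) (by ext (_ | _) <;> simp)

theorem coprodEquivCoprodI_symm_of_true {M : Bool → Type*} [∀ b, Group (M b)] (a : M true) :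
    (coprodEquivCoprodI M).symm (CoprodI.of a) = inl a := by
  simp [coprodEquivCoprodI, MonoidHom.toMulEquiv]

theorem coprodEquivCoprodI_symm_of_false {M : Bool → Type*} [∀ b, Group (M b)] (b : M false) :
    (coprodEquivCoprodI M).symm (CoprodI.of b) = inr b := by
  simp [coprodEquivCoprodI, MonoidHom.toMulEquiv]

section

variable {G K : Type*} [Group G] [Group K]

theorem inl_surjective [Subsingleton K] : Function.Surjective (inl : G →* Coprod G K) := by
  rw [← MonoidHom.range_eq_top, ← range_inl_sup_range_inr, left_eq_sup,
    Subsingleton.elim inr (1 : K →* Coprod G K), MonoidHom.range_one]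
  exact bot_le

theorem inr_surjective [Subsingleton G] : Function.Surjective (inr : K →* Coprod G K) :=
  (MulEquiv.coprodComm K G).surjective.comp inl_surjective

theorem closure_inl_inr_eq_top {a : G} {b : K} (ha : Subgroup.zpowers a = ⊤)
    (hb : Subgroup.zpowers b = ⊤) :
    Subgroup.closure {(inl a : Coprod G K), inr b} = ⊤ := by
  rw [← range_inl_sup_range_inr, MonoidHom.range_eq_map, MonoidHom.range_eq_map, ← ha, ← hb,
    MonoidHom.map_zpowers, MonoidHom.map_zpowers, Subgroup.zpowers_eq_closure,
    Subgroup.zpowers_eq_closure, ← Subgroup.closure_union, Set.singleton_union]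

theorem pow_card_eq_one_of_isConj_map {f : G →* K} {a : G} {x : K} (hx : IsConj (f a) x) :
    x ^ Nat.card G = 1 := by
  have hpow := hx.pow (Nat.card G)
  rwa [← map_pow, pow_card_eq_one', map_one, isConj_one_right] at hpow

theorem exists_generator_forall_exists_hom (G K : Type*) [Group G] [Group K] [IsCyclic G] :
    ∃ g : G, Subgroup.zpowers g = ⊤ ∧ ∀ x : K, x ^ Nat.card G = 1 → ∃ f : G →* K, f g = x := by
  obtain ⟨g, hg⟩ := IsCyclic.exists_generator (α := G)
  refine ⟨g, (Subgroup.eq_top_iff' _).2 hg, fun x hx ↦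
    ⟨monoidHomOfForallMemZpowers hg ?_, monoidHomOfForallMemZpowers_apply_gen hg _⟩⟩
  rw [orderOf_eq_card_of_forall_mem_zpowers hg]
  exact orderOf_dvd_of_pow_eq_one hx

end

variable {M : Bool → Type*} [∀ b, Group (M b)]
  {p : Coprod (M true) (M false) × Coprod (M true) (M false)}

theorem exists_nielsenEquiv_isConj [∀ b, Nontrivial (M b)]
    (hp : Subgroup.closure {p.1, p.2} = ⊤) :
    ∃ (a : M true) (b : M false) (u v : Coprod (M true) (M false)),
      NielsenEquiv p (u, v) ∧ IsConj (inl a) u ∧ IsConj (inr b) v := by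
  let e := coprodEquivCoprodI M
  obtain ⟨i, j, hij, a, b, v, hN, hbv⟩ := exists_nielsenEquiv_of_isConj_of (p := p.map e e)
    (closure_map_eq_top (θ := e.toMonoidHom) e.surjective hp)
  have hN_symm : NielsenEquiv p (e.symm (CoprodI.of a), e.symm v) := by
    simpa [Prod.map] using hN.map e.symm.toMonoidHom
  have hbv_symm : IsConj (e.symm (CoprodI.of b)) (e.symm v) := e.symm.toMonoidHom.map_isConj hbv
  cases i <;> cases j
  · contradiction
  · rw [coprodEquivCoprodI_symm_of_false] at hN_symm
    rw [coprodEquivCoprodI_symm_of_true] at hbv_symm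
    exact ⟨b, a, _, _, hN_symm.trans (.swap _ _), hbv_symm, .refl _⟩
  · rw [coprodEquivCoprodI_symm_of_true] at hN_symm
    rw [coprodEquivCoprodI_symm_of_false] at hbv_symm
    exact ⟨a, b, _, _, hN_symm, .refl _, hbv_symm⟩
  · contradiction

theorem exists_nielsenEquiv_pow_card_eq_one [∀ b, IsCyclic (M b)]
    (hp : Subgroup.closure {p.1, p.2} = ⊤) :
    ∃ u v, NielsenEquiv p (u, v) ∧ u ^ Nat.card (M true) = 1 ∧ v ^ Nat.card (M false) = 1 := by
  rcases subsingleton_or_nontrivial (M true) with _ | htrue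
  · have := isCyclic_of_surjective inr (inr_surjective (G := M true) (K := M false))
    obtain ⟨y, hN⟩ := NielsenEquiv.exists_one_right p
    obtain ⟨b, rfl⟩ := inr_surjective y
    exact ⟨1, inr b, hN.trans (.swap _ _), one_pow _, pow_card_eq_one_of_isConj_map (.refl _)⟩
  rcases subsingleton_or_nontrivial (M false) with _ | hfalse
  · have := isCyclic_of_surjective inl (inl_surjective (G := M true) (K := M false))
    obtain ⟨y, hN⟩ := NielsenEquiv.exists_one_right p
    obtain ⟨a, rfl⟩ := inl_surjective y
    exact ⟨inl a, 1, hN, pow_card_eq_one_of_isConj_map (.refl _), one_pow _⟩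
  have : ∀ b, Nontrivial (M b) := Bool.forall_bool.2 ⟨hfalse, htrue⟩
  obtain ⟨a, b, u, v, hN, hau, hbv⟩ := exists_nielsenEquiv_isConj hp
  exact ⟨u, v, hN, pow_card_eq_one_of_isConj_map hau, pow_card_eq_one_of_isConj_map hbv⟩

end CyclicFactors

theorem stmt6_general (m n : ℕ) {H : Type*} [Group H] {h1 h2 : H}
    (hgen : Subgroup.closure {h1, h2} = ⊤) :
    (∃ (θ : Monoid.Coprod (Cyc m) (Cyc n) →* H) (g1 g2 : Monoid.Coprod (Cyc m) (Cyc n)),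
        Subgroup.closure {g1, g2} = ⊤ ∧ θ g1 = h1 ∧ θ g2 = h2) ↔
    (∃ h1' h2' : H, Subgroup.closure {h1', h2'} = ⊤ ∧
        NielsenEquiv (h1, h2) (h1', h2') ∧ h1' ^ m = 1 ∧ h2' ^ n = 1) := by
  have card_cyc (k : ℕ) : Nat.card (Cyc k) = k := Nat.card_zmod k
  constructor
  · rintro ⟨θ, g1, g2, hg, rfl, rfl⟩
    obtain ⟨u, v, hN, hu, hv⟩ := exists_nielsenEquiv_pow_card_eq_one
      (M := fun b ↦ Cyc (cond b m n)) (p := (g1, g2)) hg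
    simp only [card_cyc, cond_true, cond_false] at hu hv
    have hθN := hN.map θ
    exact ⟨θ u, θ v, hθN.closure_eq_top hgen, hθN, by rw [← map_pow, hu, map_one],
      by rw [← map_pow, hv, map_one]⟩
  · rintro ⟨h1', h2', -, hN, h1m, h2n⟩
    obtain ⟨a, ha, hom_a⟩ := exists_generator_forall_exists_hom (Cyc m) H
    obtain ⟨b, hb, hom_b⟩ := exists_generator_forall_exists_hom (Cyc n) H
    obtain ⟨f, rfl⟩ := hom_a h1' (by rwa [card_cyc])
    obtain ⟨g, rfl⟩ := hom_b h2' (by rwa [card_cyc])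
    obtain ⟨⟨g1, g2⟩, hgN, hg⟩ := NielsenEquiv.exists_lift (Monoid.Coprod.lift f g)
      (p := (.inl a, .inr b)) (by simpa using hN.symm)
    exact ⟨_, g1, g2, hgN.closure_eq_top (closure_inl_inr_eq_top ha hb), by simpa using hg⟩

/-- for `G = C_m ∗ C_n`, a homomorphic image `H` of `G` and a generating
pair `(h1,h2)` of `H`, the pair `(h1,h2)` lifts to a generating pair of `G` along
some homomorphism `G → H` if and only if its Nielsen equivalence class contains a
generating pair `(h̃1,h̃2)` with `h̃1^m = h̃2^n = 1`. -/
theorem stmt6 (m n : ℕ) (hm : 0 < m) (hn : 0 < n)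
    (H : Type) [Group H]
    (hH : ∃ φ : Monoid.Coprod (Cyc m) (Cyc n) →* H, Function.Surjective φ)
    (h1 h2 : H) (hgen : Subgroup.closure {h1, h2} = ⊤) :
    (∃ (θ : Monoid.Coprod (Cyc m) (Cyc n) →* H) (g1 g2 : Monoid.Coprod (Cyc m) (Cyc n)),
        Subgroup.closure {g1, g2} = ⊤ ∧ θ g1 = h1 ∧ θ g2 = h2) ↔
    (∃ h1' h2' : H, Subgroup.closure {h1', h2'} = ⊤ ∧
        NielsenEquiv (h1, h2) (h1', h2') ∧ h1' ^ m = 1 ∧ h2' ^ n = 1) :=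
  stmt6_general m n hgen
end
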